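/- Let 0<c₁<⋯<c_m be non-integer reals. There exists a constant C>0 depending only on c₁,…,c_m, m with the following property: for every real N≥1, every δ∈(0,1], and all ξ₁,…,ξ_m∈ℝ, if δ ≤ | (1/N) ∑_{n=1}^{N} 1_{n>N/2} e(ξ₁⌊n^{c₁}⌋+⋯+ξ_m⌊n^{c_m}⌋) |, then either N ≤ C δ^{−C}, or ‖ξ_i‖_𝕋 ≤ C δ^{−C} N^{−c_i} for every i∈{1,…,m}. -/

import Mathlib

/-!
The proof combines an inverse theorem for the sums without integer parts with a Fourier-analytic
removal of the integer parts.

**Smooth phases.** Put `f(x) = ∑ θ_i x^{c_i}` and `M = ∑ |θ_i| N^{c_i}`. On `[N/3, 3N]` one has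
`|f^{(k)}| ≪ M / N^k`. Conversely, since the `c_i` are distinct and not integers, a Vandermonde
argument shows that at each point one of `m` consecutive derivatives is `≫ M / N^k`, and then it
remains so on a block of length `N / L`, `L` a constant. If the exponential sum is `≥ N / A`, with
`|θ_i| ≤ A`, one such block still carries a large sum. Van der Corput differencing `j` times, with
shifts which are multiples of an integer `q` up to a factor `A^{O(1)}`, leaves a sum with a phase
whose first difference has size between `q^j M / N^{j+1}` and `A^{O(1)}` times this. Here `j + 1` is
the order of the large derivative, larger than all `c_i`. When `q` is the largest integer for which
these first differences stay below `1/2`, the Kusmin–Landau estimate gives `M ≤ A^{O(1)}` or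
`N ≤ A^{O(1)}`.

**Integer parts.** Modulo integers `ξ_i` may be replaced by `ζ_i ∈ [-1/2, 1/2]`, and
`e(ζ⌊x⌋) = e(ζx) e(-ζ{x})`. Averaging over the grid `ℤ/Q`, `Q = p³`, against a Fejér kernel replaces
`e(-ζ{x})` by a trigonometric polynomial of degree `< Q`, with error `O(1/p)` unless `x` is within
`1/(16p)` of an integer. A shorter Fejér kernel, of order `p`, dominates a quarter of the indicator
of that neighbourhood; as the Weyl sums it involves are small by the smooth case, only `O(N/p)` of
the `n^{c_i}` are that close to an integer. With `p ≍ m/δ`, expanding the polynomials yields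
integers `k_i` with `|k_i| < Q` for which the sum with phase `∑ (ζ_i + k_i) n^{c_i}` is
`≫ δ^{O(1)} N`. The smooth case bounds `|ζ_i + k_i| N^{c_i}`, and `‖ξ_i‖_𝕋 ≤ |ζ_i + k_i|`.
-/

open MeasureTheory Filter Finset
open scoped ENNReal NNReal

noncomputable section

/-- `e(x) = e^{2πix}`. -/
def eC (x : ℝ) : ℂ := Complex.exp (2 * Real.pi * Complex.I * x)

/-- The symbol of the upper-half discrete averaging operator:
`m_{N;ℤ}(ξ) = (1/N) ∑_{n=1}^{N} 1_{n>N/2} e(ξ₁⌊n^{c₁}⌋ + ⋯ + ξ_m⌊n^{c_m}⌋)`. -/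
def mZ (m : ℕ) (c : Fin m → ℝ) (N : ℕ) (ξ : Fin m → ℝ) : ℂ :=
  (N : ℂ)⁻¹ * ∑ n ∈ Finset.Icc 1 N,
    if N < 2 * n then eC (∑ i, ξ i * (⌊(n : ℝ) ^ c i⌋ : ℝ)) else 0

/-- `‖ξ‖_𝕋`, the distance from `ξ` to the nearest integer. -/
def distT (ξ : ℝ) : ℝ := |ξ - round ξ|

/-! ### The character `e` -/

lemma eC_eq_fourierChar (x : ℝ) : eC x = Real.fourierChar x := by
  rw [eC, Real.fourierChar_apply]
  push_cast
  ring_nf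

lemma norm_eC (x : ℝ) : ‖eC x‖ = 1 := by
  rw [eC_eq_fourierChar, Circle.norm_coe]

lemma eC_zero : eC 0 = 1 := by simp [eC]

lemma eC_add (x y : ℝ) : eC (x + y) = eC x * eC y := by
  simp only [eC_eq_fourierChar, AddChar.map_add_eq_mul, Circle.coe_mul]

lemma conj_eC (x : ℝ) : (starRingEnd ℂ) (eC x) = eC (-x) := by
  simp only [eC_eq_fourierChar, AddChar.map_neg_eq_inv, Circle.coe_inv_eq_conj]

lemma eC_sub (x y : ℝ) : eC (x - y) = eC x * (starRingEnd ℂ) (eC y) := by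
  rw [sub_eq_add_neg, eC_add, conj_eC]

lemma eC_intCast (k : ℤ) : eC k = 1 :=
  Complex.exp_eq_one_iff.2 ⟨k, by push_cast; ring⟩

lemma eC_add_intCast (x : ℝ) (k : ℤ) : eC (x + k) = eC x := by
  rw [eC_add, eC_intCast, mul_one]

lemma eC_sum {ι : Type*} (s : Finset ι) (f : ι → ℝ) : eC (∑ i ∈ s, f i) = ∏ i ∈ s, eC (f i) := by
  simp only [eC, Complex.ofReal_sum, Finset.mul_sum, Complex.exp_sum]

lemma eC_natCast_mul (r : ℕ) (x : ℝ) : eC (r * x) = eC x ^ r := by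
  rw [eC, eC, ← Complex.exp_nat_mul]
  push_cast
  ring_nf

lemma norm_eC_sub_one (x : ℝ) : ‖eC x - 1‖ = 2 * |Real.sin (Real.pi * x)| := by
  have hx : eC x = Complex.exp (Complex.I * ((2 * Real.pi * x : ℝ) : ℂ)) := by
    rw [eC]
    push_cast
    ring_nf
  rw [hx, Complex.norm_exp_I_mul_ofReal_sub_one, norm_mul, Real.norm_eq_abs, Real.norm_eq_abs,
    abs_two, show 2 * Real.pi * x / 2 = Real.pi * x by ring]

lemma norm_eC_sub_one_le (x : ℝ) : ‖eC x - 1‖ ≤ 2 * Real.pi * |x| := by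
  have h : |Real.sin (Real.pi * x)| ≤ Real.pi * |x| :=
    Real.abs_sin_le_abs.trans_eq (by rw [abs_mul, abs_of_pos Real.pi_pos])
  rw [norm_eC_sub_one]
  linarith

lemma norm_eC_sub_eC_le (x y : ℝ) : ‖eC x - eC y‖ ≤ 2 * Real.pi * |x - y| := by
  have h : eC x - eC y = eC y * (eC (x - y) - 1) := by
    rw [mul_sub, ← eC_add, add_sub_cancel, mul_one]
  rw [h, norm_mul, norm_eC, one_mul]
  exact norm_eC_sub_one_le _

lemma four_mul_abs_le_norm_eC_sub_one {x : ℝ} (hx : |x| ≤ 1 / 2) : 4 * |x| ≤ ‖eC x - 1‖ := by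
  have hπx : |Real.pi * x| = Real.pi * |x| := by rw [abs_mul, abs_of_pos Real.pi_pos]
  have hsin : 2 / Real.pi * |Real.pi * x| ≤ |Real.sin (Real.pi * x)| :=
    Real.mul_abs_le_abs_sin (by rw [hπx]; nlinarith [Real.pi_pos])
  have hlhs : 2 / Real.pi * |Real.pi * x| = 2 * |x| := by
    rw [hπx]
    field_simp
  rw [norm_eC_sub_one]
  linarith

lemma distT_le_abs_sub_intCast (x : ℝ) (k : ℤ) : distT x ≤ |x - k| := round_le x k

lemma distT_nonneg (x : ℝ) : 0 ≤ distT x := abs_nonneg _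

lemma distT_natCast_mul_le (r : ℕ) (x : ℝ) : distT (r * x) ≤ r * distT x := by
  have h := norm_nsmul_le (n := r) (a := (x : UnitAddCircle))
  rwa [← AddCircle.coe_nsmul, UnitAddCircle.norm_eq, UnitAddCircle.norm_eq, nsmul_eq_mul] at h

lemma le_distT {η x : ℝ} (h : η ≤ |x|) (h' : |x| ≤ 1 - η) : η ≤ distT x := by
  rw [distT]
  rcases eq_or_ne (round x) 0 with h0 | h0
  · simpa only [h0, Int.cast_zero, sub_zero] using h
  · have h1 : (1 : ℝ) ≤ |(round x : ℝ)| := by exact_mod_cast Int.one_le_abs h0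
    have h2 := abs_sub_abs_le_abs_sub (round x : ℝ) x
    rw [abs_sub_comm] at h2
    linarith

lemma eC_sub_round (x : ℝ) : eC (x - round x) = eC x := by
  rw [← eC_add_intCast _ (round x), sub_add_cancel]

lemma four_mul_distT_le_norm_eC_sub_one (x : ℝ) : 4 * distT x ≤ ‖eC x - 1‖ := by
  rw [← eC_sub_round]
  exact four_mul_abs_le_norm_eC_sub_one (abs_sub_round x)

lemma norm_eC_sub_one_le_distT (x : ℝ) : ‖eC x - 1‖ ≤ 2 * Real.pi * distT x := by
  rw [← eC_sub_round]
  exact norm_eC_sub_one_le _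

/-! ### The Kusmin–Landau estimate -/

lemma sum_Ico_sub_mul {R : Type*} [CommRing R] (G w : ℕ → R) {u v : ℕ} (huv : u ≤ v) :
    ∑ n ∈ Finset.Ico u v, (G (n + 1) - G n) * w n =
      G v * w v - G u * w u - ∑ n ∈ Finset.Ico u v, G (n + 1) * (w (n + 1) - w n) := by
  rw [← Finset.sum_Ico_sub (fun n => G n * w n) huv, ← Finset.sum_sub_distrib]
  exact Finset.sum_congr rfl fun n _ => by ring

lemma eC_sub_one_ne_zero {lam x : ℝ} (hlam : 0 < lam) (hx : lam ≤ distT x) : eC x - 1 ≠ 0 :=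
  norm_pos_iff.1 ((by linarith : 0 < 4 * distT x).trans_le (four_mul_distT_le_norm_eC_sub_one x))

lemma norm_inv_eC_sub_one_le {lam x : ℝ} (hlam : 0 < lam) (hx : lam ≤ distT x) :
    ‖(eC x - 1)⁻¹‖ ≤ 1 / (4 * lam) := by
  rw [norm_inv, ← one_div]
  refine one_div_le_one_div_of_le (by positivity) ?_
  linarith [four_mul_distT_le_norm_eC_sub_one x]

lemma norm_inv_eC_sub_one_sub_le {lam x y : ℝ} (hlam : 0 < lam) (hx : lam ≤ distT x)
    (hy : lam ≤ distT y) :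
    ‖(eC x - 1)⁻¹ - (eC y - 1)⁻¹‖ ≤ |x - y| / lam ^ 2 := by
  have hxy : (eC x - 1)⁻¹ - (eC y - 1)⁻¹ = (eC y - eC x) * (eC x - 1)⁻¹ * (eC y - 1)⁻¹ := by
    have := eC_sub_one_ne_zero hlam hx
    have := eC_sub_one_ne_zero hlam hy
    field_simp
    ring
  calc ‖(eC x - 1)⁻¹ - (eC y - 1)⁻¹‖
      ≤ 2 * Real.pi * |y - x| * (1 / (4 * lam)) * (1 / (4 * lam)) := by
        rw [hxy, norm_mul, norm_mul]
        gcongr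
        exacts [norm_eC_sub_eC_le y x, norm_inv_eC_sub_one_le hlam hx,
          norm_inv_eC_sub_one_le hlam hy]
    _ = Real.pi / 8 * (|x - y| / lam ^ 2) := by
        rw [abs_sub_comm]
        field_simp
        ring
    _ ≤ |x - y| / lam ^ 2 :=
        mul_le_of_le_one_left (by positivity) (by linarith [Real.pi_lt_four])

lemma kusmin_landau (g : ℕ → ℝ) (u v : ℕ) {lam mu : ℝ} (hlam : 0 < lam)
    (hg : ∀ n ∈ Finset.Icc u v, lam ≤ distT (g (n + 1) - g n))
    (hg' : ∀ n ∈ Finset.Ico u v, |(g (n + 2) - g (n + 1)) - (g (n + 1) - g n)| ≤ mu) :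
    ‖∑ n ∈ Finset.Ico u v, eC (g n)‖ ≤ 1 / lam + (v - u : ℕ) * (mu / lam ^ 2) := by
  rcases lt_or_ge v u with huv | huv
  · simp [Finset.Ico_eq_empty_of_le huv.le, Nat.sub_eq_zero_of_le huv.le, hlam.le]
  let w : ℕ → ℂ := fun n => (eC (g (n + 1) - g n) - 1)⁻¹
  have hw : ∀ n ∈ Finset.Icc u v, ‖eC (g n) * w n‖ ≤ 1 / (4 * lam) := fun n hn => by
    rw [norm_mul, norm_eC, one_mul]
    exact norm_inv_eC_sub_one_le hlam (hg n hn)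
  have hterm : ∀ n ∈ Finset.Ico u v, eC (g n) = (eC (g (n + 1)) - eC (g n)) * w n := fun n hn => by
    rw [eq_mul_inv_iff_mul_eq₀ (eC_sub_one_ne_zero hlam (hg n (Ico_subset_Icc_self hn))), mul_sub,
      ← eC_add, add_sub_cancel, mul_one]
  have hdiff : ∀ n ∈ Finset.Ico u v, ‖eC (g (n + 1)) * (w (n + 1) - w n)‖ ≤ mu / lam ^ 2 :=
    fun n hn => by
    obtain ⟨hun, hnv⟩ := Finset.mem_Ico.1 hn
    rw [norm_mul, norm_eC, one_mul]
    refine (norm_inv_eC_sub_one_sub_le hlam (hg _ (Finset.mem_Icc.2 ⟨by omega, hnv⟩))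
      (hg _ (Finset.mem_Icc.2 ⟨hun, hnv.le⟩))).trans ?_
    gcongr
    exact hg' n hn
  have hends : 1 / (4 * lam) + 1 / (4 * lam) ≤ 1 / lam := by
    rw [← add_div, div_le_div_iff₀ (by positivity) hlam]
    linarith
  rw [Finset.sum_congr rfl hterm, sum_Ico_sub_mul (fun n => eC (g n)) w huv]
  refine (norm_sub_le _ _).trans (add_le_add ((norm_sub_le _ _).trans ?_) ?_)
  · exact (add_le_add (hw v (Finset.right_mem_Icc.2 huv))
      (hw u (Finset.left_mem_Icc.2 huv))).trans hends
  · simpa only [nsmul_eq_mul, Nat.card_Ico] using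
      (norm_sum_le _ _).trans (Finset.sum_le_card_nsmul _ _ _ hdiff)

/-! ### Van der Corput differencing -/

lemma sum_norm_sq_sum_le {α : Type*} (I : Finset α) {b : ℕ → α → ℂ} {D ε : ℝ} {H : ℕ} (hε : 0 ≤ ε)
    (hD : ∀ i < H, ∑ x ∈ I, ‖b i x‖ ^ 2 ≤ D)
    (hb : ∀ i j, i < j → j < H → ‖∑ x ∈ I, b i x * (starRingEnd ℂ) (b j x)‖ ≤ ε) :
    ∑ x ∈ I, ‖∑ h ∈ range H, b h x‖ ^ 2 ≤ H * D + (H : ℝ) ^ 2 * ε := by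
  set f : ℕ → ℕ → ℂ := fun i j => ∑ x ∈ I, b i x * (starRingEnd ℂ) (b j x)
  have hdiag : ∀ i < H, ‖f i i‖ ≤ D := fun i hi => by
    refine (norm_sum_le _ _).trans (le_trans (le_of_eq ?_) (hD i hi))
    exact Finset.sum_congr rfl fun x _ => by rw [norm_mul, RCLike.norm_conj, sq]
  have hoff : ∀ i < H, ∀ j < H, i ≠ j → ‖f i j‖ ≤ ε := fun i hi j hj hij => by
    rcases hij.lt_or_gt with h | h
    · exact hb i j h hj
    · rw [← RCLike.norm_conj, map_sum]
      simpa only [map_mul, Complex.conj_conj, mul_comm] using hb j i h hi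
  have hrow : ∀ i ∈ range H, ‖∑ j ∈ range H, f i j‖ ≤ D + H * ε := fun i hi => by
    rw [← Finset.add_sum_erase _ _ hi]
    refine (norm_add_le _ _).trans (add_le_add (hdiag i (Finset.mem_range.1 hi)) ?_)
    refine (norm_sum_le_of_le _ fun j hj => hoff i (Finset.mem_range.1 hi) j
      (Finset.mem_range.1 (Finset.mem_of_mem_erase hj)) (Finset.ne_of_mem_erase hj).symm).trans ?_
    rw [Finset.sum_const, nsmul_eq_mul]
    gcongr
    exact_mod_cast Finset.card_erase_le.trans_eq (Finset.card_range H)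
  have hexpand : ((∑ x ∈ I, ‖∑ h ∈ range H, b h x‖ ^ 2 : ℝ) : ℂ) =
      ∑ i ∈ range H, ∑ j ∈ range H, f i j := by
    push_cast
    simp only [← Complex.mul_conj', map_sum, Finset.sum_mul_sum, f]
    rw [Finset.sum_comm]
    exact Finset.sum_congr rfl fun i _ => Finset.sum_comm
  calc ∑ x ∈ I, ‖∑ h ∈ range H, b h x‖ ^ 2 = ‖∑ i ∈ range H, ∑ j ∈ range H, f i j‖ := by
        rw [← hexpand, Complex.norm_real, Real.norm_of_nonneg (by positivity)]
    _ ≤ ∑ _i ∈ range H, (D + H * ε) := norm_sum_le_of_le _ hrow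
    _ = H * D + (H : ℝ) ^ 2 * ε := by
        rw [Finset.sum_const, Finset.card_range, nsmul_eq_mul]
        ring

/-- The restriction of `a` to `[u, v)`, translated by `s` and extended by zero. These are the
shifted copies of one sum which van der Corput's inequality averages. -/
def translatedBlock (a : ℕ → ℂ) (u v s x : ℕ) : ℂ :=
  if x ∈ Finset.Ico (u + s) (v + s) then a (x - s) else 0

lemma sum_translatedBlock (a : ℕ → ℂ) {u v w s : ℕ} (hs : v + s ≤ w) :
    ∑ x ∈ Finset.Ico u w, translatedBlock a u v s x = ∑ n ∈ Finset.Ico u v, a n := by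
  have hsub : Finset.Ico (u + s) (v + s) ⊆ Finset.Ico u w :=
    Finset.Ico_subset_Ico (Nat.le_add_right u s) hs
  simp only [translatedBlock]
  rw [Finset.sum_ite_mem, Finset.inter_eq_right.2 hsub,
    ← Finset.sum_Ico_add' (fun x => a (x - s))]
  simp only [Nat.add_sub_cancel]

lemma sum_norm_sq_translatedBlock_le {a : ℕ → ℂ} (ha : ∀ n, ‖a n‖ ≤ 1) (I : Finset ℕ) (u v s : ℕ) :
    ∑ x ∈ I, ‖translatedBlock a u v s x‖ ^ 2 ≤ (v - u : ℕ) := by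
  have hterm : ∀ x ∈ I, ‖translatedBlock a u v s x‖ ^ 2 ≤
      if x ∈ Finset.Ico (u + s) (v + s) then 1 else 0 := fun x _ => by
    rw [translatedBlock]
    split_ifs
    · exact pow_le_one₀ (norm_nonneg _) (ha _)
    · simp
  refine (Finset.sum_le_sum hterm).trans ?_
  rw [Finset.sum_boole]
  have hsub : Finset.filter (· ∈ Finset.Ico (u + s) (v + s)) I ⊆ Finset.Ico (u + s) (v + s) :=
    fun x hx => (Finset.mem_filter.1 hx).2
  exact_mod_cast (Finset.card_le_card hsub).trans_eq
    ((Nat.card_Ico _ _).trans (Nat.add_sub_add_right v s u))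

lemma sum_translatedBlock_mul_conj (a : ℕ → ℂ) {u v w s t : ℕ} (hst : s ≤ t) (ht : v + t ≤ w) :
    ∑ x ∈ Finset.Ico u w, translatedBlock a u v s x * (starRingEnd ℂ) (translatedBlock a u v t x) =
      ∑ n ∈ Finset.Ico u (v - (t - s)), a (n + (t - s)) * (starRingEnd ℂ) (a n) := by
  symm
  refine Finset.sum_of_injOn (· + t) (add_left_injective t).injOn
    (fun n hn => ?_) (fun x _ hx => ?_) (fun n hn => ?_)
  · simp only [Finset.coe_Ico, Set.mem_Ico] at hn ⊢
    omega
  · simp only [translatedBlock, Finset.mem_Ico, Finset.coe_Ico, Set.mem_image, Set.mem_Ico] at hx ⊢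
    split_ifs
    · exact absurd ⟨x - t, by omega, by omega⟩ hx
    all_goals simp only [map_zero, mul_zero, zero_mul]
  · rw [Finset.mem_Ico] at hn
    rw [translatedBlock, translatedBlock, if_pos (Finset.mem_Ico.2 (by omega)),
      if_pos (Finset.mem_Ico.2 (by omega)), Nat.add_sub_cancel, Nat.add_sub_assoc hst]

lemma van_der_corput_inequality {a : ℕ → ℂ} (ha : ∀ n, ‖a n‖ ≤ 1) (u v q H : ℕ) {ε : ℝ}
    (hε : 0 ≤ ε) (hcorr : ∀ d ∈ Finset.Ico 1 H,
      ‖∑ n ∈ Finset.Ico u (v - q * d), a (n + q * d) * (starRingEnd ℂ) (a n)‖ ≤ ε) :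
    (H * ‖∑ n ∈ Finset.Ico u v, a n‖) ^ 2 ≤
      (v + q * H - u : ℕ) * (H * (v - u : ℕ) + (H : ℝ) ^ 2 * ε) := by
  set b : ℕ → ℕ → ℂ := fun h => translatedBlock a u v (q * h)
  set I : Finset ℕ := Finset.Ico u (v + q * H)
  have hmem : ∀ h ≤ H, v + q * h ≤ v + q * H := fun h hh =>
    add_le_add_right (Nat.mul_le_mul_left q hh) v
  have hmul : (H : ℂ) * ∑ n ∈ Finset.Ico u v, a n = ∑ x ∈ I, ∑ h ∈ range H, b h x := by
    rw [Finset.sum_comm, Finset.sum_congr rfl fun h hh => sum_translatedBlock a (s := q * h)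
      (hmem h (Finset.mem_range.1 hh).le), Finset.sum_const, Finset.card_range, nsmul_eq_mul]
  have hdiag : ∀ i < H, ∑ x ∈ I, ‖b i x‖ ^ 2 ≤ (v - u : ℕ) := fun i _ =>
    sum_norm_sq_translatedBlock_le ha I u v (q * i)
  have hoff : ∀ i j, i < j → j < H → ‖∑ x ∈ I, b i x * (starRingEnd ℂ) (b j x)‖ ≤ ε :=
    fun i j hij hj => by
      rw [sum_translatedBlock_mul_conj a (Nat.mul_le_mul_left q hij.le) (hmem j hj.le),
        ← Nat.mul_sub]
      exact hcorr _ (Finset.mem_Ico.2 (by omega))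
  calc (H * ‖∑ n ∈ Finset.Ico u v, a n‖) ^ 2 = ‖∑ x ∈ I, ∑ h ∈ range H, b h x‖ ^ 2 := by
        rw [← hmul, norm_mul, Complex.norm_natCast]
    _ ≤ (∑ x ∈ I, ‖∑ h ∈ range H, b h x‖) ^ 2 := by
        gcongr
        exact norm_sum_le _ _
    _ ≤ I.card * ∑ x ∈ I, ‖∑ h ∈ range H, b h x‖ ^ 2 := sq_sum_le_card_mul_sum_sq
    _ ≤ (v + q * H - u : ℕ) * (H * (v - u : ℕ) + (H : ℝ) ^ 2 * ε) := by
        rw [Nat.card_Ico]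
        gcongr
        exact sum_norm_sq_sum_le I hε hdiag hoff

lemma exists_large_correlation {a : ℕ → ℂ} (ha : ∀ n, ‖a n‖ ≤ 1) {u v q N B : ℕ} (hN : 0 < N)
    (hB : 0 < B) (hvu : v - u ≤ N) (hq : q * B ^ 2 ≤ N)
    (hS : 3 * (N : ℝ) / B ≤ ‖∑ n ∈ Finset.Ico u v, a n‖) :
    ∃ d ∈ Finset.Ico 1 (B ^ 2), 3 * (N : ℝ) / B ^ 2 ≤
      ‖∑ n ∈ Finset.Ico u (v - q * d), a (n + q * d) * (starRingEnd ℂ) (a n)‖ := by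
  by_contra! h
  have hN' : (0 : ℝ) < N := by exact_mod_cast hN
  have hB' : (0 : ℝ) < B := by exact_mod_cast hB
  have hvdc := van_der_corput_inequality ha u v q (B ^ 2) (by positivity) fun d hd => (h d hd).le
  have hlen : ((v + q * B ^ 2 - u : ℕ) : ℝ) ≤ 2 * N := by
    exact_mod_cast (by omega : v + q * B ^ 2 - u ≤ 2 * N)
  have hupper : (((B ^ 2 : ℕ) : ℝ) * ‖∑ n ∈ Finset.Ico u v, a n‖) ^ 2 ≤
      2 * N * ((B : ℝ) ^ 2 * N + ((B : ℝ) ^ 2) ^ 2 * (3 * N / B ^ 2)) := by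
    refine hvdc.trans ?_
    push_cast
    gcongr
  have hlower : (((B ^ 2 : ℕ) : ℝ) * (3 * N / B)) ^ 2 ≤
      (((B ^ 2 : ℕ) : ℝ) * ‖∑ n ∈ Finset.Ico u v, a n‖) ^ 2 := by gcongr
  have hcontra := hlower.trans hupper
  push_cast at hcontra
  field_simp at hcontra
  norm_num at hcontra

/-- The iterated forward difference of `f` with steps in `l`, the phase produced by repeated van der
Corput differencing. -/
def iterDiff (l : List ℕ) (f : ℝ → ℝ) : ℝ → ℝ := l.foldr (fun h => fwdDiff (h : ℝ)) f

lemma eC_fwdDiff (f : ℝ → ℝ) (h n : ℕ) :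
    eC (fwdDiff (h : ℝ) f n) = eC (f (n + h : ℕ)) * (starRingEnd ℂ) (eC (f n)) := by
  rw [fwdDiff, eC_sub, Nat.cast_add]

lemma iterated_van_der_corput (f : ℝ → ℝ) {u v q N A : ℕ} (hN : 0 < N) (hA : 0 < A)
    (hvu : v - u ≤ N) (hS : 3 * (N : ℝ) / A ≤ ‖∑ n ∈ Finset.Ico u v, eC (f n)‖) (j : ℕ)
    (hq : q * A ^ 2 ^ j ≤ N) :
    ∃ l : List ℕ, l.length = j ∧ (∀ h ∈ l, q ≤ h ∧ h ≤ q * A ^ 2 ^ j) ∧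
      3 * (N : ℝ) / (A : ℝ) ^ 2 ^ j ≤
        ‖∑ n ∈ Finset.Ico u (v - l.sum), eC (iterDiff l f n)‖ := by
  induction j with
  | zero => exact ⟨[], rfl, by simp, by simpa [iterDiff] using hS⟩
  | succ j ih =>
    have hpow : A ^ 2 ^ j ≤ A ^ 2 ^ (j + 1) := by gcongr <;> omega
    obtain ⟨l, rfl, hl, hlS⟩ := ih ((Nat.mul_le_mul_left q hpow).trans hq)
    obtain ⟨d, hd, hdS⟩ := exists_large_correlation (a := fun n => eC (iterDiff l f n)) (q := q)
      (fun n => (norm_eC _).le) hN (pow_pos hA (2 ^ l.length)) (by omega : v - l.sum - u ≤ N)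
      (by rwa [← pow_mul, ← pow_succ]) (by exact_mod_cast hlS)
    rw [Finset.mem_Ico, ← pow_mul, ← pow_succ] at hd
    refine ⟨(q * d) :: l, rfl, ?_, ?_⟩
    · simp only [List.forall_mem_cons]
      exact ⟨⟨Nat.le_mul_of_pos_right q hd.1, Nat.mul_le_mul_left q hd.2.le⟩,
        fun h hh => ⟨(hl h hh).1, (hl h hh).2.trans (Nat.mul_le_mul_left q hpow)⟩⟩
    · rw [List.sum_cons, add_comm (q * d), ← Nat.sub_sub]
      simp only [← eC_fwdDiff] at hdS
      refine le_trans (le_of_eq ?_) hdS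
      push_cast
      rw [← pow_mul, ← pow_succ]

section DerivativeTower

variable {F : ℕ → ℝ → ℝ}

lemma hasDerivAt_iterDiff (hF : ∀ k x, 0 < x → HasDerivAt (F k) (F (k + 1) x) x) (l : List ℕ)
    (k : ℕ) {x : ℝ} (hx : 0 < x) : HasDerivAt (iterDiff l (F k)) (iterDiff l (F (k + 1)) x) x := by
  induction l generalizing x with
  | nil => exact hF k x hx
  | cons h l ih =>
    exact ((ih (by positivity : 0 < x + h)).comp_add_const x (h : ℝ)).sub (ih hx)

lemma exists_iterDiff_eq_prod_mul (hF : ∀ k x, 0 < x → HasDerivAt (F k) (F (k + 1) x) x)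
    (l : List ℕ) (k : ℕ) {x : ℝ} (hx : 0 < x) :
    ∃ z ∈ Set.Icc x (x + l.sum), iterDiff l (F k) x = l.prod * F (k + l.length) z := by
  induction l generalizing k x with
  | nil => exact ⟨x, by simp, by simp [iterDiff]⟩
  | cons h l ih =>
    rcases h.eq_zero_or_pos with rfl | hh
    · exact ⟨x, ⟨le_rfl, le_add_of_nonneg_right (Nat.cast_nonneg _)⟩, by simp [iterDiff, fwdDiff]⟩
    have hxh : x < x + h := lt_add_of_pos_right x (by exact_mod_cast hh)
    obtain ⟨y, hy, hslope⟩ := exists_hasDerivAt_eq_slope (iterDiff l (F k))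
      (iterDiff l (F (k + 1))) hxh
      (fun y hy => (hasDerivAt_iterDiff hF l k (hx.trans_le hy.1)).continuousAt.continuousWithinAt)
      (fun y hy => hasDerivAt_iterDiff hF l k (hx.trans hy.1))
    obtain ⟨z, hz, hyz⟩ := ih (k + 1) (hx.trans hy.1)
    refine ⟨z, ⟨hy.1.le.trans hz.1, ?_⟩, ?_⟩
    · have := hz.2
      rw [List.sum_cons, Nat.cast_add]
      linarith [hy.2]
    · have hh' : (h : ℝ) ≠ 0 := by exact_mod_cast hh.ne'
      rw [hyz, add_sub_cancel_left, eq_div_iff hh'] at hslope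
      rw [List.prod_cons, List.length_cons, add_comm l.length, ← add_assoc, Nat.cast_mul, mul_assoc,
        mul_comm, hslope]
      rfl

lemma exists_iterDiff_add_one_sub (hF : ∀ k x, 0 < x → HasDerivAt (F k) (F (k + 1) x) x)
    (l : List ℕ) {n : ℕ} (hn : 0 < n) :
    ∃ z ∈ Set.Icc (n : ℝ) (n + l.sum + 1),
      iterDiff l (F 0) (n + 1 : ℕ) - iterDiff l (F 0) n = l.prod * F (l.length + 1) z := by
  obtain ⟨z, hz, h⟩ := exists_iterDiff_eq_prod_mul hF (1 :: l) 0 (x := n) (by exact_mod_cast hn)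
  refine ⟨z, ⟨hz.1, hz.2.trans_eq ?_⟩, ?_⟩
  · rw [List.sum_cons, Nat.cast_add, Nat.cast_one, add_comm (1 : ℝ), add_assoc]
  · simpa [iterDiff, fwdDiff] using h

lemma exists_iterDiff_add_two_sub (hF : ∀ k x, 0 < x → HasDerivAt (F k) (F (k + 1) x) x)
    (l : List ℕ) {n : ℕ} (hn : 0 < n) :
    ∃ z ∈ Set.Icc (n : ℝ) (n + l.sum + 2),
      (iterDiff l (F 0) (n + 2 : ℕ) - iterDiff l (F 0) (n + 1 : ℕ)) -
        (iterDiff l (F 0) (n + 1 : ℕ) - iterDiff l (F 0) n) = l.prod * F (l.length + 2) z := by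
  obtain ⟨z, hz, h⟩ :=
    exists_iterDiff_eq_prod_mul hF (1 :: 1 :: l) 0 (x := n) (by exact_mod_cast hn)
  refine ⟨z, ⟨hz.1, hz.2.trans_eq ?_⟩, ?_⟩
  · simp only [List.sum_cons, Nat.cast_add, Nat.cast_one]
    ring
  · simpa [iterDiff, fwdDiff, add_assoc, one_add_one_eq_two] using h

lemma norm_sum_eC_iterDiff_le (hF : ∀ k x, 0 < x → HasDerivAt (F k) (F (k + 1) x) x)
    (l : List ℕ) {u v N : ℕ} (hu : 0 < u) (hvu : v - u ≤ N) (hN : 0 < N)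
    {b B Y : ℝ} (hb : 0 < b) (hB : 0 ≤ B) (hY : 0 < Y) (hl : 0 < l.prod)
    (hlY : l.prod * (B * Y) ≤ 1 / 2)
    (hlow : ∀ x ∈ Set.Icc (u : ℝ) (v + 1), b * Y ≤ |F (l.length + 1) x|)
    (hup : ∀ x ∈ Set.Icc (u : ℝ) (v + 1), |F (l.length + 1) x| ≤ B * Y)
    (hup' : ∀ x ∈ Set.Icc (u : ℝ) (v + 1), |F (l.length + 2) x| ≤ B * Y / N) :
    ‖∑ n ∈ Finset.Ico u (v - l.sum), eC (iterDiff l (F 0) n)‖ ≤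
      (1 / b + B / b ^ 2) / (l.prod * Y) := by
  have hl' : (0 : ℝ) < l.prod := by exact_mod_cast hl
  have hmem : ∀ {n r : ℕ} {z : ℝ}, u ≤ n → n + l.sum + r ≤ v + 1 →
      z ∈ Set.Icc (n : ℝ) (n + l.sum + r) → z ∈ Set.Icc (u : ℝ) (v + 1) := fun hn hr hz =>
    ⟨(Nat.cast_le.2 hn).trans hz.1, hz.2.trans (by exact_mod_cast hr)⟩
  have hKL := kusmin_landau (fun n => iterDiff l (F 0) n) u (v - l.sum)
    (lam := l.prod * (b * Y)) (mu := l.prod * (B * Y / N)) (by positivity)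
    (fun n hn => by
      rw [Finset.mem_Icc] at hn
      obtain ⟨z, hz, h⟩ := exists_iterDiff_add_one_sub hF l (hu.trans_le hn.1)
      have hz' := hmem hn.1 (by omega : n + l.sum + 1 ≤ v + 1) (by exact_mod_cast hz)
      have hdiff : |(l.prod : ℝ) * F (l.length + 1) z| = l.prod * |F (l.length + 1) z| := by
        rw [abs_mul, Nat.abs_cast]
      have h1 := mul_le_mul_of_nonneg_left (hlow z hz') hl'.le
      have h2 := mul_le_mul_of_nonneg_left (hup z hz') hl'.le
      rw [h]
      exact le_distT (by linarith) (by linarith))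
    (fun n hn => by
      rw [Finset.mem_Ico] at hn
      obtain ⟨z, hz, h⟩ := exists_iterDiff_add_two_sub hF l (hu.trans_le hn.1)
      have hz' := hmem hn.1 (by omega : n + l.sum + 2 ≤ v + 1) (by exact_mod_cast hz)
      rw [h, abs_mul, Nat.abs_cast]
      exact mul_le_mul_of_nonneg_left (hup' z hz') hl'.le)
  have hlen : ((v - l.sum - u : ℕ) : ℝ) ≤ N := by exact_mod_cast (by omega : v - l.sum - u ≤ N)
  have : (0 : ℝ) < N := by exact_mod_cast hN
  calc ‖∑ n ∈ Finset.Ico u (v - l.sum), eC (iterDiff l (F 0) n)‖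
      ≤ 1 / (l.prod * (b * Y)) +
          N * (l.prod * (B * Y / N) / (l.prod * (b * Y)) ^ 2) := hKL.trans (by gcongr)
    _ = (1 / b + B / b ^ 2) / (l.prod * Y) := by
        field_simp

lemma mul_pow_mul_le_of_large_sum (hF : ∀ k x, 0 < x → HasDerivAt (F k) (F (k + 1) x) x)
    {u v N A q : ℕ} (hu : 0 < u) (hvu : v - u ≤ N) (hN : 0 < N) (hA : 0 < A)
    (hq : 0 < q) (j : ℕ) (hqN : q * A ^ 2 ^ j ≤ N) {b B Y : ℝ} (hb : 0 < b) (hB : 0 ≤ B)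
    (hY : 0 < Y) (hqY : (q * (A : ℝ) ^ 2 ^ j) ^ j * (B * Y) ≤ 1 / 2)
    (hlow : ∀ x ∈ Set.Icc (u : ℝ) (v + 1), b * Y ≤ |F (j + 1) x|)
    (hup : ∀ x ∈ Set.Icc (u : ℝ) (v + 1), |F (j + 1) x| ≤ B * Y)
    (hup' : ∀ x ∈ Set.Icc (u : ℝ) (v + 1), |F (j + 2) x| ≤ B * Y / N)
    (hS : 3 * (N : ℝ) / A ≤ ‖∑ n ∈ Finset.Ico u v, eC (F 0 n)‖) :
    N * (q ^ j * Y) ≤ (1 / b + B / b ^ 2) * (A : ℝ) ^ 2 ^ j := by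
  obtain ⟨l, rfl, hl, hlS⟩ := iterated_van_der_corput (F 0) hN hA hvu hS j hqN
  have hl_low : q ^ l.length ≤ l.prod := List.pow_card_le_prod _ _ fun h hh => (hl h hh).1
  have hl_up : l.prod ≤ (q * A ^ 2 ^ l.length) ^ l.length :=
    List.prod_le_pow_card _ _ fun h hh => (hl h hh).2
  have hl_low' : (q : ℝ) ^ l.length ≤ l.prod := by exact_mod_cast hl_low
  have hl_up' : (l.prod : ℝ) ≤ (q * (A : ℝ) ^ 2 ^ l.length) ^ l.length := by exact_mod_cast hl_up
  have hl0 : 0 < l.prod := (pow_pos hq _).trans_le hl_low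
  have hKL := norm_sum_eC_iterDiff_le hF l hu hvu hN hb hB hY hl0
    ((mul_le_mul_of_nonneg_right hl_up' (by positivity)).trans hqY) hlow hup hup'
  have : (0 : ℝ) < A := by exact_mod_cast hA
  have : (0 : ℝ) < l.prod := by exact_mod_cast hl0
  have hmain := hlS.trans hKL
  rw [div_le_div_iff₀ (by positivity) (by positivity)] at hmain
  have hmono : N * (q ^ l.length * Y) ≤ N * (l.prod * Y) := by gcongr
  have hthree : 0 ≤ N * (l.prod * Y) := by positivity
  linarith

end DerivativeTower

lemma exists_maximal_step {N P : ℕ} {X Y : ℝ} (j : ℕ) (hP : 0 < P) (hPN : P ≤ N) (hX : 0 ≤ X)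
    (hXY : X * (P : ℝ) ^ j ≤ Y) :
    ∃ q : ℕ, 0 < q ∧ q * P ≤ N ∧ X * ((q : ℝ) * P) ^ j ≤ Y ∧
      ((N : ℝ) ≤ 2 * (q * P) ∨ Y ≤ X * (2 * ((q : ℝ) * P)) ^ j) := by
  classical
  let good : ℕ → Prop := fun q => q * P ≤ N ∧ X * ((q : ℝ) * P) ^ j ≤ Y
  have hgood_one : good 1 := ⟨by rwa [one_mul], by rwa [Nat.cast_one, one_mul]⟩
  have hN : 1 ≤ N := hP.trans_le hPN
  set q := Nat.findGreatest good N
  obtain ⟨hqN, hqY⟩ : good q := Nat.findGreatest_spec hN hgood_one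
  have hq : 1 ≤ q := Nat.le_findGreatest hN hgood_one
  have hbad : ¬ good (q + 1) := fun h =>
    (Nat.le_findGreatest ((Nat.le_mul_of_pos_right _ hP).trans h.1) h).not_gt q.lt_succ_self
  have hq2 : ((q + 1 : ℕ) : ℝ) * P ≤ 2 * (q * P) := by
    exact_mod_cast (by nlinarith : (q + 1) * P ≤ 2 * (q * P))
  refine ⟨q, hq, hqN, hqY, ?_⟩
  rcases not_and_or.1 hbad with h | h
  · left
    exact le_trans (by exact_mod_cast (not_le.1 h).le) hq2
  · right
    exact (not_le.1 h).le.trans (by gcongr)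

lemma size_le_of_large_sum {F : ℕ → ℝ → ℝ}
    (hF : ∀ k x, 0 < x → HasDerivAt (F k) (F (k + 1) x) x) {u v N A : ℕ} (hu : 0 < u)
    (hvu : v - u ≤ N) (hA : 0 < A) (j : ℕ) {b B M : ℝ} (hb : 0 < b) (hB : 0 < B) (hM : 0 < M)
    (hAN : A ^ 2 ^ j ≤ N) (hMN : 2 * B * M * ((A : ℝ) ^ 2 ^ j) ^ j ≤ (N : ℝ) ^ (j + 1))
    (hlow : ∀ x ∈ Set.Icc (u : ℝ) (v + 1), b * M ≤ |F (j + 1) x| * N ^ (j + 1))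
    (hup : ∀ x ∈ Set.Icc (u : ℝ) (v + 1), |F (j + 1) x| * N ^ (j + 1) ≤ B * M)
    (hup' : ∀ x ∈ Set.Icc (u : ℝ) (v + 1), |F (j + 2) x| * N ^ (j + 2) ≤ B * M)
    (hS : 3 * (N : ℝ) / A ≤ ‖∑ n ∈ Finset.Ico u v, eC (F 0 n)‖) :
    M ≤ 2 ^ j * (1 / b + B / b ^ 2) * ((A : ℝ) ^ 2 ^ j) ^ (j + 1) ∨
      N ≤ 2 * B * (2 ^ j * (1 / b + B / b ^ 2) * ((A : ℝ) ^ 2 ^ j) ^ (j + 1)) := by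
  have hP : 0 < A ^ 2 ^ j := pow_pos hA _
  have hN : 0 < N := hP.trans_le hAN
  have hN' : (0 : ℝ) < N := by exact_mod_cast hN
  obtain ⟨q, hq, hqN, hqY, hmax⟩ :=
    exists_maximal_step j hP hAN (by positivity : 0 ≤ 2 * B * M) (by exact_mod_cast hMN)
  push_cast at hqY hmax
  set P : ℝ := (A : ℝ) ^ 2 ^ j
  set G : ℝ := 1 / b + B / b ^ 2
  have htest : N * (q ^ j * (M / (N : ℝ) ^ (j + 1))) ≤ G * P :=
    mul_pow_mul_le_of_large_sum hF hu hvu hN hA hq j hqN (B := B) hb hB.le (by positivity)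
      (by rw [← mul_div_assoc, ← mul_div_assoc, div_le_iff₀ (by positivity)]; linarith)
      (fun x hx => by rw [← mul_div_assoc, div_le_iff₀ (by positivity)]; exact hlow x hx)
      (fun x hx => by rw [← mul_div_assoc, le_div_iff₀ (by positivity)]; exact hup x hx)
      (fun x hx => by
        rw [← mul_div_assoc, div_div, ← pow_succ, le_div_iff₀ (by positivity)]
        exact hup' x hx) hS
  have hqM : (2 * ((q : ℝ) * P)) ^ j * M ≤ 2 ^ j * G * P ^ (j + 1) * N ^ j := by
    have hqM' : (q : ℝ) ^ j * M ≤ G * P * N ^ j := by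
      rw [← mul_div_assoc, ← mul_div_assoc, div_le_iff₀ (by positivity), pow_succ] at htest
      exact le_of_mul_le_mul_right (by linarith) hN'
    calc (2 * ((q : ℝ) * P)) ^ j * M = (2 * P) ^ j * (q ^ j * M) := by ring
      _ ≤ (2 * P) ^ j * (G * P * N ^ j) := by gcongr
      _ = 2 ^ j * G * P ^ (j + 1) * N ^ j := by ring
  have hNj : (0 : ℝ) < N ^ j := by positivity
  refine hmax.imp (fun h => le_of_mul_le_mul_right ?_ hNj) (fun h => le_of_mul_le_mul_right ?_ hNj)
  · calc M * (N : ℝ) ^ j ≤ M * (2 * (q * P)) ^ j := by gcongr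
      _ ≤ 2 ^ j * G * P ^ (j + 1) * N ^ j := by linarith
  · calc (N : ℝ) * N ^ j = N ^ (j + 1) := (pow_succ' _ _).symm
      _ ≤ 2 * B * ((2 * (q * P)) ^ j * M) := by linarith
      _ ≤ 2 * B * (2 ^ j * G * P ^ (j + 1) * N ^ j) := by gcongr
      _ = 2 * B * (2 ^ j * G * P ^ (j + 1)) * N ^ j := by ring

/-! ### Derivatives of `∑ θ_i x^{c_i}` -/

section Phase

variable {ι : Type*} [Fintype ι]

/-- The `k`-th derivative at `x > 0` of the phase `∑ i, θ i * x ^ c i`. -/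
def phase (c θ : ι → ℝ) (k : ℕ) (x : ℝ) : ℝ :=
  ∑ i, θ i * ((descPochhammer ℝ k).eval (c i) * x ^ (c i - k))

/-- The size of the phase `∑ i, θ i * x ^ c i` at scale `N`, with which its derivatives are
compared. -/
def phaseSize (c θ : ι → ℝ) (N : ℝ) : ℝ := ∑ i, |θ i| * N ^ c i

lemma phase_zero (c θ : ι → ℝ) (x : ℝ) : phase c θ 0 x = ∑ i, θ i * x ^ c i := by
  simp [phase]

lemma hasDerivAt_phase (c θ : ι → ℝ) (k : ℕ) (x : ℝ) (hx : 0 < x) :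
    HasDerivAt (phase c θ k) (phase c θ (k + 1) x) x := by
  refine HasDerivAt.fun_sum fun i _ => HasDerivAt.const_mul _ ?_
  convert (Real.hasDerivAt_rpow_const (p := c i - k) (Or.inl hx.ne')).const_mul
    ((descPochhammer ℝ k).eval (c i)) using 1
  rw [descPochhammer_succ_eval, Nat.cast_succ, sub_sub, mul_assoc]

lemma le_phaseSize (c θ : ι → ℝ) {N : ℝ} (hN : 0 ≤ N) (i : ι) :
    |θ i| * N ^ c i ≤ phaseSize c θ N :=
  Finset.single_le_sum (f := fun i => |θ i| * N ^ c i) (fun _ _ => by positivity)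
    (Finset.mem_univ i)

lemma rpow_le_three_rpow_mul {N x : ℝ} (hN : 0 < N) (hx : N / 3 ≤ x) (hx' : x ≤ 3 * N) (r : ℝ) :
    x ^ r ≤ 3 ^ |r| * N ^ r := by
  have hx0 : 0 < x := (by positivity : 0 < N / 3).trans_le hx
  rcases le_or_gt 0 r with hr | hr
  · rw [abs_of_nonneg hr, ← Real.mul_rpow (by norm_num) hN.le]
    exact Real.rpow_le_rpow hx0.le hx' hr
  · rw [abs_of_neg hr, Real.rpow_neg (by norm_num), ← Real.inv_rpow (by norm_num),
      ← Real.mul_rpow (by norm_num) hN.le]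
    exact Real.rpow_le_rpow_of_nonpos (by positivity) (by linarith) hr.le

lemma exists_abs_phase_mul_pow_le (c : ι → ℝ) (J : ℕ) :
    ∃ B : ℝ, 0 < B ∧ ∀ k < J, ∀ (θ : ι → ℝ) {N x : ℝ}, 0 < N → N / 3 ≤ x → x ≤ 3 * N →
      |phase c θ k x| * N ^ k ≤ B * phaseSize c θ N := by
  obtain ⟨B, hB⟩ := Finite.exists_le fun ki : Fin J × ι =>
    |(descPochhammer ℝ ki.1).eval (c ki.2)| * 3 ^ |c ki.2 - ki.1|
  refine ⟨max B 1, by positivity, fun k hk θ N x hN hx hx' => ?_⟩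
  rw [phaseSize, Finset.mul_sum, ← abs_of_pos (pow_pos hN k), ← abs_mul, phase, Finset.sum_mul]
  refine (Finset.abs_sum_le_sum_abs _ _).trans (Finset.sum_le_sum fun i _ => ?_)
  have hNk : N ^ (c i - k) * N ^ k = N ^ c i := by
    rw [← Real.rpow_add_natCast hN.ne', sub_add_cancel]
  calc |θ i * ((descPochhammer ℝ k).eval (c i) * x ^ (c i - k)) * N ^ k|
      = |θ i| * (|(descPochhammer ℝ k).eval (c i)| * x ^ (c i - k)) * N ^ k := by
        have hx0 : 0 < x := (by positivity : 0 < N / 3).trans_le hx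
        rw [abs_mul, abs_mul, abs_mul, abs_of_pos (pow_pos hN k),
          abs_of_pos (Real.rpow_pos_of_pos hx0 _)]
    _ ≤ |θ i| * (|(descPochhammer ℝ k).eval (c i)| * (3 ^ |c i - k| * N ^ (c i - k))) * N ^ k := by
        gcongr
        exact rpow_le_three_rpow_mul hN hx hx' _
    _ = |(descPochhammer ℝ k).eval (c i)| * 3 ^ |c i - k| * (|θ i| * N ^ c i) := by
        rw [← hNk]
        ring
    _ ≤ max B 1 * (|θ i| * N ^ c i) := by
        gcongr
        exact (hB (⟨k, hk⟩, i)).trans (le_max_left _ _)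

lemma exists_vecMul_lower_bound {m : ℕ} (hm : 0 < m) {V : Matrix (Fin m) (Fin m) ℝ}
    (hV : IsUnit V) :
    ∃ κ : ℝ, 0 < κ ∧ ∀ y : Fin m → ℝ, ∃ k, κ * ∑ i, |y i| ≤ |Matrix.vecMul y V k| := by
  obtain ⟨K, hK, hKV⟩ := V.vecMulLinear.exists_antilipschitzWith
    (LinearMap.ker_eq_bot.2 (Matrix.vecMul_injective_iff_isUnit.2 hV))
  have : (0 : ℝ) < K := hK
  have : (0 : ℝ) < m := by exact_mod_cast hm
  refine ⟨1 / (m * K), by positivity, fun y => ?_⟩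
  by_contra! h
  have hsum : ∑ i, |y i| ≤ m * (K * ‖Matrix.vecMul y V‖) := by
    refine (Finset.sum_le_card_nsmul _ _ ‖y‖ fun i _ => norm_le_pi_norm y i).trans ?_
    rw [Finset.card_univ, Fintype.card_fin, nsmul_eq_mul]
    gcongr
    exact ZeroHomClass.bound_of_antilipschitz V.vecMulLinear hKV y
  have hlt : ‖Matrix.vecMul y V‖ < 1 / (m * K) * ∑ i, |y i| :=
    (pi_norm_lt_iff ((abs_nonneg _).trans_lt (h ⟨0, hm⟩))).2 h
  refine hlt.not_ge ((mul_le_mul_of_nonneg_left hsum (by positivity)).trans_eq ?_)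
  field_simp

lemma exists_vandermonde_lower_bound [Nonempty ι] {d : ι → ℝ} (hd : Function.Injective d)
    {p : ℕ → Polynomial ℝ} (hp : ∀ k, (p k).Monic) (hdeg : ∀ k, (p k).natDegree = k) :
    ∃ κ : ℝ, 0 < κ ∧ ∀ y : ι → ℝ, ∃ k < Fintype.card ι,
      κ * ∑ i, |y i| ≤ |∑ i, y i * (p k).eval (d i)| := by
  set e : ι ≃ Fin (Fintype.card ι) := Fintype.equivFin ι
  have hV : IsUnit (Matrix.of fun i k : Fin (Fintype.card ι) => (p k).eval (d (e.symm i))) := by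
    rw [Matrix.isUnit_iff_isUnit_det, isUnit_iff_ne_zero,
      ← Matrix.det_eval_matrixOfPolynomials_eq_det_vandermonde (fun i => d (e.symm i))
        (fun k : Fin _ => p k) (fun k => hdeg k) (fun k => hp k),
      Matrix.det_vandermonde_ne_zero_iff]
    exact hd.comp e.symm.injective
  obtain ⟨κ, hκ, hκV⟩ := exists_vecMul_lower_bound Fintype.card_pos hV
  refine ⟨κ, hκ, fun y => ?_⟩
  obtain ⟨k, hk⟩ := hκV (y ∘ e.symm)
  refine ⟨k, k.isLt, ?_⟩
  rw [← e.symm.sum_comp fun i => |y i|, ← e.symm.sum_comp fun i => y i * (p k).eval (d i)]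
  exact hk

lemma eval_descPochhammer_ne_zero {c : ℝ} (hc : ∀ k : ℤ, c ≠ k) (n : ℕ) :
    (descPochhammer ℝ n).eval c ≠ 0 := by
  rw [descPochhammer_eval_eq_prod_range, Finset.prod_ne_zero_iff]
  exact fun k _ => sub_ne_zero.2 (by exact_mod_cast hc k)

lemma phase_add_mul_pow (c θ : ι → ℝ) (K k : ℕ) {x : ℝ} (hx : 0 < x) :
    phase c θ (K + k) x * x ^ (K + k) =
      ∑ i, θ i * (descPochhammer ℝ K).eval (c i) * x ^ c i *
        (descPochhammer ℝ k).eval (c i - K) := by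
  rw [phase, Finset.sum_mul]
  refine Finset.sum_congr rfl fun i _ => ?_
  have hxc : x ^ (c i - (K + k : ℕ)) * x ^ (K + k) = x ^ c i := by
    rw [← Real.rpow_add_natCast hx.ne', sub_add_cancel]
  rw [← descPochhammer_mul, Polynomial.eval_mul, Polynomial.eval_comp, ← hxc]
  simp only [Polynomial.eval_sub, Polynomial.eval_X, Polynomial.eval_natCast]
  ring

lemma exists_phaseSize_le_mul_sum (c : ι → ℝ) {w : ι → ℝ} (hw : ∀ i, w i ≠ 0) :
    ∃ D : ℝ, 0 < D ∧ ∀ (θ : ι → ℝ) {N x : ℝ}, 0 < N → N / 3 ≤ x → x ≤ 3 * N →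
      phaseSize c θ N ≤ D * ∑ i, |θ i * w i * x ^ c i| := by
  obtain ⟨D, hD⟩ := Finite.exists_le fun i => 3 ^ |c i| / |w i|
  refine ⟨max D 1, by positivity, fun θ N x hN hx hx' => ?_⟩
  have hx0 : 0 < x := (by positivity : 0 < N / 3).trans_le hx
  rw [phaseSize, Finset.mul_sum]
  refine Finset.sum_le_sum fun i _ => ?_
  have hwi : 0 < |w i| := abs_pos.2 (hw i)
  calc |θ i| * N ^ c i ≤ |θ i| * (3 ^ |c i| * x ^ c i) := by
        gcongr
        exact rpow_le_three_rpow_mul hx0 (by linarith) (by linarith) _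
    _ = 3 ^ |c i| / |w i| * |θ i * w i * x ^ c i| := by
        rw [abs_mul, abs_mul, abs_of_pos (Real.rpow_pos_of_pos hx0 _)]
        field_simp
    _ ≤ max D 1 * |θ i * w i * x ^ c i| := by
        gcongr
        exact (hD i).trans (le_max_left _ _)

lemma exists_phaseSize_le_abs_phase [Nonempty ι] {c : ι → ℝ} (hc : Function.Injective c)
    (hint : ∀ i, ∀ k : ℤ, c i ≠ k) (K : ℕ) :
    ∃ b : ℝ, 0 < b ∧ ∀ (θ : ι → ℝ) {N x : ℝ}, 0 < N → N / 3 ≤ x → x ≤ 3 * N →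
      ∃ k < Fintype.card ι, b * phaseSize c θ N ≤ |phase c θ (K + k) x| * N ^ (K + k) := by
  obtain ⟨κ, hκ, hκy⟩ := exists_vandermonde_lower_bound (ι := ι) (d := fun i => c i - K)
    (fun i i' h => hc (sub_left_injective h)) (fun k => monic_descPochhammer ℝ k)
    (fun k => descPochhammer_natDegree ℝ k)
  obtain ⟨D, hD, hsize⟩ :=
    exists_phaseSize_le_mul_sum c fun i => eval_descPochhammer_ne_zero (hint i) K
  set T : ℝ := 3 ^ (K + Fintype.card ι)
  have hT : 0 < T := by positivity
  refine ⟨κ / (D * T), by positivity, fun θ N x hN hx hx' => ?_⟩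
  have hx0 : 0 < x := (by positivity : 0 < N / 3).trans_le hx
  set y : ι → ℝ := fun i => θ i * (descPochhammer ℝ K).eval (c i) * x ^ c i
  obtain ⟨k, hk, hky⟩ := hκy y
  have hphase : |∑ i, y i * (descPochhammer ℝ k).eval (c i - K)| ≤
      |phase c θ (K + k) x| * (T * N ^ (K + k)) := by
    rw [← phase_add_mul_pow c θ K k hx0, abs_mul, abs_of_pos (pow_pos hx0 _)]
    gcongr
    calc x ^ (K + k) ≤ (3 * N) ^ (K + k) := by gcongr
      _ = 3 ^ (K + k) * N ^ (K + k) := mul_pow _ _ _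
      _ ≤ T * N ^ (K + k) := by
          gcongr
          exact pow_le_pow_right₀ (by norm_num) (by omega)
  refine ⟨k, hk, ?_⟩
  calc κ / (D * T) * phaseSize c θ N ≤ κ / (D * T) * (D * ∑ i, |y i|) := by
        gcongr
        exact hsize θ hN hx hx'
    _ = κ * (∑ i, |y i|) / T := by field_simp
    _ ≤ |phase c θ (K + k) x| * (T * N ^ (K + k)) / T := by
        exact div_le_div_of_nonneg_right (hky.trans hphase) hT.le
    _ = |phase c θ (K + k) x| * N ^ (K + k) := by
        rw [mul_left_comm, mul_div_cancel_left₀ _ hT.ne']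

end Phase

/-! ### The inverse theorem for smooth phases -/

lemma exists_large_block_sum (a : ℕ → ℂ) {u v L : ℕ} (huv : u ≤ v) (hL : 0 < L) :
    ∃ u' v', u ≤ u' ∧ u' ≤ v' ∧ v' ≤ v ∧ v' - u' ≤ (v - u) / L + 1 ∧
      ‖∑ n ∈ Finset.Ico u v, a n‖ ≤ L * ‖∑ n ∈ Finset.Ico u' v', a n‖ := by
  set W := (v - u) / L + 1
  let t : ℕ → ℕ := fun k => min v (u + k * W)
  have ht : ∀ k, t k ≤ t (k + 1) := fun k => by simp only [t, add_mul]; omega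
  have htu : ∀ k, u ≤ t k := fun k => by simp only [t]; omega
  have hsum : ∑ n ∈ Finset.Ico u v, a n =
      ∑ k ∈ range L, ∑ n ∈ Finset.Ico (t k) (t (k + 1)), a n := by
    have htL : t L = v := by
      have := Nat.lt_mul_div_succ (v - u) hL
      exact min_eq_left (by simp only [W, mul_add] at this ⊢; omega)
    have ht0 : t 0 = u := by simp [t, huv]
    rw [Finset.sum_congr rfl fun k _ => eq_sub_of_add_eq'
        (Finset.sum_Ico_consecutive a (htu k) (ht k)),
      Finset.sum_range_sub (fun k => ∑ n ∈ Finset.Ico u (t k), a n), htL, ht0,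
      Finset.Ico_self, Finset.sum_empty, sub_zero]
  obtain ⟨k, -, hk⟩ := Finset.exists_max_image (range L)
    (fun k => ‖∑ n ∈ Finset.Ico (t k) (t (k + 1)), a n‖) (Finset.nonempty_range_iff.2 hL.ne')
  refine ⟨t k, t (k + 1), htu k, ht k, min_le_left _ _, ?_, ?_⟩
  · simp only [t, add_mul]
    omega
  · rw [hsum]
    refine (norm_sum_le _ _).trans ((Finset.sum_le_card_nsmul _ _ _ hk).trans_eq ?_)
    rw [Finset.card_range, nsmul_eq_mul]

lemma exists_large_block_sum_Ioc (a : ℕ → ℂ) (N : ℕ) {L : ℕ} (hL : 0 < L) :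
    ∃ u v, N ≤ 2 * u ∧ u ≤ v ∧ v ≤ N + 1 ∧ v - u ≤ N / L + 1 ∧
      ‖∑ n ∈ Finset.Ioc (N / 2) N, a n‖ ≤ L * ‖∑ n ∈ Finset.Ico u v, a n‖ := by
  obtain ⟨u, v, hu, huv, hv, hvu, ha⟩ :=
    exists_large_block_sum a (by omega : N / 2 + 1 ≤ N + 1) hL
  have hlen : (N + 1 - (N / 2 + 1)) / L ≤ N / L := Nat.div_le_div_right (by omega)
  refine ⟨u, v, by omega, huv, hv, by omega, ?_⟩
  rwa [← Finset.Ico_add_one_add_one_eq_Ioc]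

lemma cast_add_one_sub_le_of_sub_le_div {N u v L : ℕ} (hL : 0 < L) (hLN : 2 * L ≤ N)
    (hvu : v - u ≤ N / L + 1) : (v + 1 : ℝ) - u ≤ 2 * (N / L) := by
  have : (v : ℝ) ≤ ((N / L : ℕ) + 1) + u := by exact_mod_cast (by omega : v ≤ (N / L + 1) + u)
  have : ((N / L : ℕ) : ℝ) ≤ N / L := Nat.cast_div_le
  have : 2 ≤ (N : ℝ) / L := by
    rw [le_div_iff₀ (by exact_mod_cast hL)]
    exact_mod_cast hLN
  linarith

lemma half_le_abs_of_abs_deriv_le {f f' : ℝ → ℝ} {u w l K : ℝ}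
    (hf : ∀ x ∈ Set.Icc u w, HasDerivAt f (f' x) x) (hf' : ∀ x ∈ Set.Icc u w, |f' x| ≤ K)
    (hl : l ≤ |f u|) (hK : 0 ≤ K) (hKl : K * (w - u) ≤ l / 2) :
    ∀ x ∈ Set.Icc u w, l / 2 ≤ |f x| := by
  intro x hx
  have hmvt : |f x - f u| ≤ K * |x - u| :=
    Convex.norm_image_sub_le_of_norm_hasDerivWithin_le
      (fun y hy => (hf y hy).hasDerivWithinAt) hf' (convex_Icc u w)
      (Set.left_mem_Icc.2 (hx.1.trans hx.2)) hx
  rw [abs_of_nonneg (sub_nonneg.2 hx.1)] at hmvt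
  have : K * (x - u) ≤ K * (w - u) := by gcongr; exact hx.2
  have := abs_sub_abs_le_abs_sub (f u) (f x)
  rw [abs_sub_comm] at this
  linarith

lemma natCast_mul_pow_le_pow {A : ℕ} (hA : 2 ≤ A) (n e : ℕ) :
    (n : ℝ) * (A : ℝ) ^ e ≤ (A : ℝ) ^ (n + e) := by
  rw [pow_add]
  gcongr
  exact_mod_cast (Nat.lt_pow_self hA).le

lemma natCast_mul_pow_le_pow_mul {A : ℕ} (hA : 2 ≤ A) (l e : ℕ) :
    ((l * A : ℕ) : ℝ) ^ e ≤ (A : ℝ) ^ ((l + 1) * e) := by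
  rw [pow_mul]
  gcongr
  simpa using natCast_mul_pow_le_pow hA l 1

lemma exists_size_le_pow_of_large_sum (j : ℕ) {b B R : ℝ} (hb : 0 < b) (hB : 0 < B)
    (hR : 0 ≤ R) :
    ∃ C : ℕ, ∀ {F : ℕ → ℝ → ℝ} {u v N A : ℕ} {M : ℝ},
      (∀ k x, 0 < x → HasDerivAt (F k) (F (k + 1) x) x) → 0 < u → v - u ≤ N → 2 ≤ A →
      M ≤ R * (A * N ^ j) →
      (∀ x ∈ Set.Icc (u : ℝ) (v + 1), b * M ≤ |F (j + 1) x| * N ^ (j + 1)) →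
      (∀ x ∈ Set.Icc (u : ℝ) (v + 1), |F (j + 1) x| * N ^ (j + 1) ≤ B * M) →
      (∀ x ∈ Set.Icc (u : ℝ) (v + 1), |F (j + 2) x| * N ^ (j + 2) ≤ B * M) →
      3 * (N : ℝ) / A ≤ ‖∑ n ∈ Finset.Ico u v, eC (F 0 n)‖ →
      (N : ℝ) ≤ (A : ℝ) ^ C ∨ M ≤ (A : ℝ) ^ C := by
  set G : ℝ := 2 ^ j * (1 / b + B / b ^ 2)
  have hG : 0 ≤ G := by positivity
  have hBR : 0 ≤ 2 * B * R := by positivity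
  have hBG : 0 ≤ 2 * B * G := by positivity
  obtain ⟨Z, hZ⟩ := exists_nat_ge (1 + 2 * B * R + G + 2 * B * G)
  refine ⟨Z + (2 ^ j * (j + 1) + 1), fun {F u v N A M} hF hu hvu hA hMR hlow hup hup' hS => ?_⟩
  set E : ℝ := (A : ℝ) ^ (Z + (2 ^ j * (j + 1) + 1))
  have : (1 : ℝ) ≤ A := by exact_mod_cast one_le_two.trans hA
  have hdom : ∀ {z : ℝ} {k s : ℕ}, z ≤ Z → k ≤ j + 1 → s ≤ 1 →
      z * (((A : ℝ) ^ 2 ^ j) ^ k * A ^ s) ≤ E := fun hz hk hs => by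
    refine le_trans ?_ (natCast_mul_pow_le_pow hA Z _)
    rw [← pow_mul, ← pow_add]
    gcongr
  by_contra! h
  obtain ⟨hNE, hME⟩ := h
  have hM : 0 < M := lt_trans (by positivity) hME
  have hAN : ((A ^ 2 ^ j : ℕ) : ℝ) ≤ N := by
    simpa using (hdom (z := 1) (k := 1) (by linarith) (by omega) zero_le_one).trans hNE.le
  have hMN : 2 * B * M * ((A : ℝ) ^ 2 ^ j) ^ j ≤ (N : ℝ) ^ (j + 1) := by
    calc 2 * B * M * ((A : ℝ) ^ 2 ^ j) ^ j
        ≤ 2 * B * (R * (A * N ^ j)) * ((A : ℝ) ^ 2 ^ j) ^ j := by gcongr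
      _ = 2 * B * R * (((A : ℝ) ^ 2 ^ j) ^ j * A ^ 1) * N ^ j := by ring
      _ ≤ N * N ^ j := by
          gcongr
          exact (hdom (by linarith) (by omega) le_rfl).trans hNE.le
      _ = (N : ℝ) ^ (j + 1) := (pow_succ' _ _).symm
  rcases size_le_of_large_sum hF hu hvu (by omega) j hb hB hM (by exact_mod_cast hAN) hMN hlow hup
    hup' hS with h | h
  · have hGE := hdom (z := G) (k := j + 1) (by linarith) le_rfl zero_le_one
    rw [pow_zero, mul_one] at hGE
    exact hME.not_ge (h.trans hGE)
  · have hGE := hdom (z := 2 * B * G) (k := j + 1) (by linarith) le_rfl zero_le_one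
    rw [pow_zero, mul_one, mul_assoc (2 * B)] at hGE
    exact hNE.not_ge (h.trans hGE)

section Phase

variable {ι : Type*} [Fintype ι]

lemma exists_phase_bounds_on_block [Nonempty ι] {c : ι → ℝ} (hc : Function.Injective c)
    (hint : ∀ i, ∀ k : ℤ, c i ≠ k) (K : ℕ) :
    ∃ b B : ℝ, ∃ L : ℕ, 0 < b ∧ 0 < B ∧ 0 < L ∧
      ∀ (θ : ι → ℝ) {N u w : ℝ}, 0 < N → N / 3 ≤ u → u ≤ w → w ≤ 3 * N → w - u ≤ 2 * (N / L) →
        ∃ j < K + Fintype.card ι, K ≤ j ∧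
          (∀ x ∈ Set.Icc u w, b * phaseSize c θ N ≤ |phase c θ (j + 1) x| * N ^ (j + 1)) ∧
          (∀ x ∈ Set.Icc u w, |phase c θ (j + 1) x| * N ^ (j + 1) ≤ B * phaseSize c θ N) ∧
          ∀ x ∈ Set.Icc u w, |phase c θ (j + 2) x| * N ^ (j + 2) ≤ B * phaseSize c θ N := by
  obtain ⟨B, hB, hup⟩ := exists_abs_phase_mul_pow_le c (K + Fintype.card ι + 2)
  obtain ⟨b, hb, hlow⟩ := exists_phaseSize_le_abs_phase hc hint (K + 1)
  obtain ⟨L, hL⟩ := exists_nat_gt (4 * B / b)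
  have hL0 : (0 : ℝ) < L := lt_trans (by positivity) hL
  refine ⟨b / 2, B, L, by positivity, hB, by exact_mod_cast hL0,
    fun θ N u w hN hu huw hw hwu => ?_⟩
  set M := phaseSize c θ N
  have hM : 0 ≤ M := Finset.sum_nonneg fun i _ => by positivity
  obtain ⟨k, hk, hku⟩ := hlow θ hN hu (huw.trans hw)
  have hup' : ∀ i < K + Fintype.card ι + 2, ∀ x ∈ Set.Icc u w,
      |phase c θ i x| * N ^ i ≤ B * M :=
    fun i hi x hx => hup i hi θ hN (hu.trans hx.1) (hx.2.trans hw)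
  rw [add_right_comm, ← div_le_iff₀ (by positivity)] at hku
  refine ⟨K + k, by omega, by omega, fun x hx => ?_, hup' _ (by omega), hup' _ (by omega)⟩
  have hhalf := half_le_abs_of_abs_deriv_le (K := B * M / N ^ (K + k + 2))
    (fun x hx => hasDerivAt_phase c θ (K + k + 1) x (by linarith [hx.1]))
    (fun x hx => (le_div_iff₀ (by positivity)).2 (hup' (K + k + 2) (by omega) x hx))
    hku (by positivity) ?_ x hx
  · rw [div_right_comm, div_le_iff₀ (by positivity)] at hhalf
    linarith
  · calc B * M / N ^ (K + k + 2) * (w - u) ≤ B * M / N ^ (K + k + 2) * (2 * (N / L)) := by gcongr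
      _ = 4 * B / L * M / N ^ (K + k + 1) / 2 := by
          rw [pow_succ N (K + k + 1)]
          field_simp
          norm_num
      _ ≤ b * M / N ^ (K + k + 1) / 2 := by
          gcongr
          exact (div_le_comm₀ hL0 hb).2 hL.le

lemma phaseSize_le_card_mul {c θ : ι → ℝ} {N A : ℝ} {K : ℕ} (hN : 1 ≤ N) (hK : ∀ i, c i ≤ K)
    (hθ : ∀ i, |θ i| ≤ A) : phaseSize c θ N ≤ Fintype.card ι * (A * N ^ K) := by
  refine (Finset.sum_le_card_nsmul _ _ (A * N ^ K) fun i _ => ?_).trans_eq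
    (by rw [Finset.card_univ, nsmul_eq_mul])
  rw [← Real.rpow_natCast]
  exact mul_le_mul (hθ i) (Real.rpow_le_rpow_of_exponent_le hN (hK i)) (by positivity)
    ((abs_nonneg _).trans (hθ i))

lemma exists_phaseSize_le_pow_of_large_block_sum [Nonempty ι] {c : ι → ℝ}
    (hc : Function.Injective c) (hint : ∀ i, ∀ k : ℤ, c i ≠ k) :
    ∃ L C : ℕ, 0 < L ∧ ∀ {N A u v : ℕ} {θ : ι → ℝ}, 2 ≤ A → (∀ i, |θ i| ≤ A) →
      2 * L ≤ N → N ≤ 2 * u → u ≤ v → v ≤ N + 1 → v - u ≤ N / L + 1 →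
      3 * (N : ℝ) / A ≤ ‖∑ n ∈ Finset.Ico u v, eC (∑ i, θ i * (n : ℝ) ^ c i)‖ →
      (N : ℝ) ≤ (A : ℝ) ^ C ∨ phaseSize c θ N ≤ (A : ℝ) ^ C := by
  obtain ⟨K, hK⟩ : ∃ K : ℕ, ∀ i, c i ≤ K :=
    (Finite.exists_le c).imp' Nat.ceil fun _ h i => (h i).trans (Nat.le_ceil _)
  obtain ⟨b, B, L, hb, hB, hL, hblock⟩ := exists_phase_bounds_on_block hc hint K
  choose C hC using fun j => exists_size_le_pow_of_large_sum j hb hB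
    (Nat.cast_nonneg (α := ℝ) (Fintype.card ι))
  obtain ⟨C₀, hC₀⟩ := Finite.exists_le fun j : Fin (K + Fintype.card ι) => C j
  refine ⟨L, C₀, hL, fun {N A u v θ} hA hθ hNL hu huv hv hvu hS => ?_⟩
  have hA1 : (1 : ℝ) ≤ A := by exact_mod_cast one_le_two.trans hA
  have hN : (2 : ℝ) ≤ N := by exact_mod_cast (by omega : 2 ≤ N)
  have hu' : (N : ℝ) ≤ 2 * u := by exact_mod_cast hu
  have hv' : (v : ℝ) ≤ N + 1 := by exact_mod_cast hv
  have huv' : (u : ℝ) ≤ v := by exact_mod_cast huv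
  obtain ⟨j, hj, hKj, hlow, hup, hup'⟩ :=
    hblock θ (u := u) (w := v + 1) (by linarith : (0 : ℝ) < N) (by linarith) (by linarith)
      (by linarith) (cast_add_one_sub_le_of_sub_le_div hL hNL hvu)
  have hsize : phaseSize c θ N ≤ Fintype.card ι * (A * (N : ℝ) ^ j) :=
    phaseSize_le_card_mul (by linarith) (fun i => (hK i).trans (by exact_mod_cast hKj)) hθ
  have hCj : (A : ℝ) ^ C j ≤ A ^ C₀ := pow_le_pow_right₀ hA1 (hC₀ ⟨j, hj⟩)
  simp only [← phase_zero] at hS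
  exact (hC j (hasDerivAt_phase c θ) (by omega) (by omega) hA hsize hlow hup hup' hS).imp
    (·.trans hCj) (·.trans hCj)

lemma exists_smooth_inverse [Nonempty ι] {c : ι → ℝ} (hc : Function.Injective c)
    (hint : ∀ i, ∀ k : ℤ, c i ≠ k) :
    ∃ C : ℕ, ∀ {N A : ℕ} {θ : ι → ℝ}, 2 ≤ A → (∀ i, |θ i| ≤ A) →
      (N : ℝ) / A ≤ ‖∑ n ∈ Finset.Ioc (N / 2) N, eC (∑ i, θ i * (n : ℝ) ^ c i)‖ →
      (N : ℝ) ≤ (A : ℝ) ^ C ∨ phaseSize c θ N ≤ (A : ℝ) ^ C := by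
  obtain ⟨L, C, hL, hC⟩ := exists_phaseSize_le_pow_of_large_block_sum hc hint
  refine ⟨(3 * L + 1) * (C + 1), fun {N A θ} hA hθ hS => ?_⟩
  set A' := 3 * L * A with hA'
  have hAA' : A ≤ A' := Nat.le_mul_of_pos_left A (by omega)
  have hLA' : 2 * L ≤ A' := by nlinarith
  have hA'1 : (1 : ℝ) ≤ A' := by exact_mod_cast (by omega : 1 ≤ A')
  suffices h : (N : ℝ) ≤ A' ^ (C + 1) ∨ phaseSize c θ N ≤ A' ^ (C + 1) from
    h.imp (·.trans (natCast_mul_pow_le_pow_mul hA _ _))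
      (·.trans (natCast_mul_pow_le_pow_mul hA _ _))
  rcases le_or_gt N (2 * L) with hNL | hNL
  · refine Or.inl (le_trans (b := (A' : ℝ)) ?_ (le_self_pow₀ hA'1 (Nat.succ_ne_zero _)))
    exact_mod_cast hNL.trans hLA'
  obtain ⟨u, v, hu, huv, hv, hvu, hSuv⟩ := exists_large_block_sum_Ioc
    (fun n => eC (∑ i, θ i * (n : ℝ) ^ c i)) N hL
  have hS' : 3 * (N : ℝ) / A' ≤ ‖∑ n ∈ Finset.Ico u v, eC (∑ i, θ i * (n : ℝ) ^ c i)‖ := by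
    have hL' : (0 : ℝ) < L := by exact_mod_cast hL
    refine le_trans (le_of_eq ?_) ((div_le_iff₀' hL').2 (hS.trans hSuv))
    rw [hA']
    push_cast
    field_simp
  have hCC : (A' : ℝ) ^ C ≤ A' ^ (C + 1) := pow_le_pow_right₀ hA'1 C.le_succ
  exact (hC (by omega) (fun i => (hθ i).trans (by exact_mod_cast hAA')) hNL.le hu huv hv hvu
    hS').imp (·.trans hCC) (·.trans hCC)

end Phase

/-! ### The Fejér kernel -/

/-- The Fejér kernel `|Q⁻¹ ∑_{r < Q} e(r y)|²`, normalised to take the value `1` at `y = 0`. -/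
def fejer (Q : ℕ) (y : ℝ) : ℝ := ‖∑ r ∈ range Q, eC (r * y)‖ ^ 2 / (Q : ℝ) ^ 2

lemma fejer_nonneg (Q : ℕ) (y : ℝ) : 0 ≤ fejer Q y := by
  rw [fejer]
  positivity

lemma fejer_eq_sum (Q : ℕ) (y : ℝ) :
    (fejer Q y : ℂ) = ∑ t ∈ range Q ×ˢ range Q, eC (((t.1 - t.2 : ℤ) : ℝ) * y) / (Q : ℂ) ^ 2 := by
  rw [fejer, Complex.ofReal_div, Complex.ofReal_pow, ← Complex.mul_conj', map_sum,
    Finset.sum_mul_sum, ← Finset.sum_product', Finset.sum_div]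
  push_cast
  refine Finset.sum_congr rfl fun t _ => ?_
  rw [← eC_sub, ← sub_mul]

lemma fejer_le {Q : ℕ} {η y : ℝ} (hη : 0 < η) (hy : η ≤ distT y) :
    fejer Q y ≤ 1 / (4 * η ^ 2 * (Q : ℝ) ^ 2) := by
  set S := ‖∑ r ∈ range Q, eC (r * y)‖
  have hgeom : ‖eC y - 1‖ * S ≤ 2 := by
    simp only [S, eC_natCast_mul]
    rw [← norm_mul, mul_geom_sum]
    refine (norm_sub_le _ _).trans_eq ?_
    rw [norm_pow, norm_eC, one_pow, norm_one, one_add_one_eq_two]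
  have hS : 4 * η * S ≤ 2 := by
    refine le_trans ?_ hgeom
    gcongr
    exact le_trans (by gcongr) (four_mul_distT_le_norm_eC_sub_one y)
  have hS' : S ≤ 1 / (2 * η) := by
    rw [le_div_iff₀ (by positivity)]
    linarith
  calc fejer Q y = S ^ 2 / (Q : ℝ) ^ 2 := rfl
    _ ≤ (1 / (2 * η)) ^ 2 / (Q : ℝ) ^ 2 := by gcongr
    _ = 1 / (4 * η ^ 2 * (Q : ℝ) ^ 2) := by
        rw [div_pow, div_div]
        ring

lemma one_div_four_le_fejer {R : ℕ} (hR : 0 < R) {x : ℝ} (hx : distT x ≤ 1 / (16 * R)) :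
    1 / 4 ≤ fejer R x := by
  have : (0 : ℝ) < R := by exact_mod_cast hR
  have hterm : ∀ r ∈ range R, ‖eC (r * x) - 1‖ ≤ 1 / 2 := fun r hr => by
    have hdist : distT (r * x) ≤ 1 / 16 :=
      calc distT (r * x) ≤ r * distT x := distT_natCast_mul_le r x
        _ ≤ R * (1 / (16 * R)) := by
            gcongr
            · exact distT_nonneg x
            · exact (Finset.mem_range.1 hr).le
        _ = 1 / 16 := by field_simp
    nlinarith [norm_eC_sub_one_le_distT (r * x), Real.pi_lt_four, Real.pi_pos]
  have hdiff : ‖(R : ℂ) - ∑ r ∈ range R, eC (r * x)‖ ≤ R * (1 / 2) := by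
    rw [norm_sub_rev]
    have := norm_sum_le_of_le _ hterm
    simpa only [Finset.sum_sub_distrib, Finset.sum_const, Finset.card_range, nsmul_eq_mul,
      mul_one] using this
  have hsum : (R : ℝ) / 2 ≤ ‖∑ r ∈ range R, eC (r * x)‖ := by
    have := norm_sub_norm_le (R : ℂ) (∑ r ∈ range R, eC (r * x))
    rw [Complex.norm_natCast] at this
    linarith
  calc (1 : ℝ) / 4 = (R / 2) ^ 2 / R ^ 2 := by
        field_simp
        norm_num
    _ ≤ fejer R x := by
        rw [fejer]
        gcongr

lemma sum_eC_mul_div_eq_zero {Q : ℕ} {k : ℤ} (hk : k ≠ 0) (hkQ : |k| < Q) :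
    ∑ j ∈ range Q, eC (k * (j / Q)) = 0 := by
  have hQ : (Q : ℝ) ≠ 0 := by
    have := (abs_nonneg k).trans_lt hkQ
    exact_mod_cast this.ne'
  have hpow : ∀ j : ℕ, eC (k * (j / Q)) = eC (k / Q) ^ j := fun j => by
    rw [← eC_natCast_mul]
    ring_nf
  have hroot : eC (k / Q) ^ Q = 1 := by
    rw [← eC_natCast_mul, mul_div_cancel₀ _ hQ, eC_intCast]
  have hne : eC (k / Q) ≠ 1 := fun h => by
    obtain ⟨l, hl⟩ := Complex.exp_eq_one_iff.1 h
    have hkl : (k : ℝ) / Q = l := by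
      rw [mul_comm (l : ℂ)] at hl
      exact_mod_cast mul_left_cancel₀ Complex.two_pi_I_ne_zero hl
    rw [div_eq_iff hQ] at hkl
    exact hk (Int.eq_zero_of_abs_lt_dvd ⟨l, by rw [mul_comm]; exact_mod_cast hkl⟩ hkQ)
  have hgeom := mul_geom_sum (eC (k / Q)) Q
  rw [hroot, sub_self] at hgeom
  simp only [hpow]
  exact (mul_eq_zero.1 hgeom).resolve_left (sub_ne_zero.2 hne)

lemma sum_fejer_sub_div {Q : ℕ} (hQ : 0 < Q) (x : ℝ) :
    ∑ j ∈ range Q, fejer Q (x - j / Q) = 1 := by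
  have hQ' : (Q : ℂ) ≠ 0 := by exact_mod_cast hQ.ne'
  have hterm : ∀ t ∈ range Q ×ˢ range Q,
      ∑ j ∈ range Q, eC (((t.1 - t.2 : ℤ) : ℝ) * (x - j / Q)) =
        if t.1 = t.2 then (Q : ℂ) else 0 := by
    rintro ⟨r, s⟩ ht
    rw [Finset.mem_product, Finset.mem_range, Finset.mem_range] at ht
    split_ifs with h
    · obtain rfl : r = s := h
      simp [eC_zero]
    · have hj : ∀ j : ℕ, eC (((r - s : ℤ) : ℝ) * (x - j / Q)) =
          eC (((r - s : ℤ) : ℝ) * x) * eC (((s - r : ℤ) : ℝ) * (j / Q)) := fun j => by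
        rw [← eC_add]
        congr 1
        push_cast
        ring
      simp only [hj]
      rw [← Finset.mul_sum, sum_eC_mul_div_eq_zero (by omega) (abs_lt.2 (by omega)), mul_zero]
  have hsum : ((∑ j ∈ range Q, fejer Q (x - j / Q) : ℝ) : ℂ) = 1 := by
    push_cast
    simp only [fejer_eq_sum]
    rw [Finset.sum_comm]
    simp only [← Finset.sum_div]
    rw [Finset.sum_congr rfl hterm, Finset.sum_product,
      Finset.sum_congr rfl fun r hr => (Finset.sum_ite_eq _ r _).trans (if_pos hr),
      Finset.sum_const, Finset.card_range, nsmul_eq_mul, ← sq, div_self (pow_ne_zero 2 hQ')]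
  exact_mod_cast hsum

/-- A trigonometric polynomial of degree less than `Q` approximating `x ↦ e(-ζ {x})`: the average
of its values on the grid `Q⁻¹ ℤ` against the Fejér kernel. -/
def fejerApprox (Q : ℕ) (ζ x : ℝ) : ℂ :=
  ∑ j ∈ range Q, eC (-(ζ * (j / Q))) * (fejer Q (x - j / Q) : ℂ)

/-- The coefficient of `e(k x)` contributed to `fejerApprox Q ζ x` by each pair `(r, s)` in
`[0, Q)²` with `r - s = k`. -/
def fejerCoeff (Q : ℕ) (ζ : ℝ) (k : ℤ) : ℂ :=
  ∑ j ∈ range Q, eC (-((ζ + k) * (j / Q))) / (Q : ℂ) ^ 2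

lemma norm_fejerCoeff_le (Q : ℕ) (ζ : ℝ) (k : ℤ) : ‖fejerCoeff Q ζ k‖ ≤ 1 / Q := by
  refine (norm_sum_le_of_le _ fun j _ => (norm_div _ _).le).trans_eq ?_
  simp only [norm_eC, norm_pow, Complex.norm_natCast, Finset.sum_const, Finset.card_range,
    nsmul_eq_mul]
  rcases eq_or_ne (Q : ℝ) 0 with h | h
  · simp [h]
  · field_simp

lemma fejerApprox_eq_sum (Q : ℕ) (ζ x : ℝ) :
    fejerApprox Q ζ x = ∑ t ∈ range Q ×ˢ range Q,
      fejerCoeff Q ζ (t.1 - t.2) * eC (((t.1 - t.2 : ℤ) : ℝ) * x) := by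
  simp only [fejerApprox, fejerCoeff, fejer_eq_sum, Finset.mul_sum, Finset.sum_mul]
  rw [Finset.sum_comm]
  refine Finset.sum_congr rfl fun t _ => Finset.sum_congr rfl fun j _ => ?_
  rw [mul_div_assoc', div_mul_eq_mul_div, ← eC_add, ← eC_add]
  congr 2
  ring

lemma norm_fejerApprox_le {Q : ℕ} (hQ : 0 < Q) (ζ x : ℝ) : ‖fejerApprox Q ζ x‖ ≤ 1 := by
  rw [← sum_fejer_sub_div hQ x]
  refine norm_sum_le_of_le _ fun j _ => ?_
  rw [norm_mul, norm_eC, one_mul, Complex.norm_real, Real.norm_of_nonneg (fejer_nonneg _ _)]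

lemma distT_add_intCast (x : ℝ) (k : ℤ) : distT (x + k) = distT x := by
  rw [distT, distT, round_add_intCast, Int.cast_add, add_sub_add_right_eq_sub]

lemma distT_le_fract (x : ℝ) : distT x ≤ Int.fract x := by
  simpa only [Int.self_sub_floor, Int.abs_fract] using distT_le_abs_sub_intCast x ⌊x⌋

lemma distT_le_one_sub_fract (x : ℝ) : distT x ≤ 1 - Int.fract x := by
  have h := distT_le_abs_sub_intCast x (⌊x⌋ + 1)
  rwa [Int.cast_add, Int.cast_one, ← sub_sub, Int.self_sub_floor, abs_sub_comm,
    Int.abs_one_sub_fract] at h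

lemma norm_sub_mul_fejer_le {Q j : ℕ} (hj : j < Q) {η ζ x : ℝ} (hη : 0 < η) (hx : η ≤ distT x) :
    ‖eC (-(ζ * Int.fract x)) - eC (-(ζ * (j / Q)))‖ * fejer Q (x - j / Q) ≤
      2 * Real.pi * |ζ| * η * fejer Q (x - j / Q) + 1 / (2 * η ^ 2 * (Q : ℝ) ^ 2) := by
  have hQ : (0 : ℝ) < Q := by exact_mod_cast (Nat.zero_le j).trans_lt hj
  have hj0 : 0 ≤ (j : ℝ) / Q := by positivity
  have hj1 : (j : ℝ) / Q < 1 := (div_lt_one hQ).2 (by exact_mod_cast hj)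
  have hfejer := fejer_nonneg Q (x - j / Q)
  rcases lt_or_ge |Int.fract x - j / Q| η with h | h
  · refine le_add_of_le_of_nonneg (mul_le_mul_of_nonneg_right ?_ hfejer) (by positivity)
    refine (norm_eC_sub_eC_le _ _).trans ?_
    rw [neg_sub_neg, ← mul_sub, abs_mul, abs_sub_comm, ← mul_assoc]
    gcongr
  · have hdist : η ≤ distT (x - j / Q) := by
      rw [← Int.fract_add_floor x, add_sub_right_comm, distT_add_intCast]
      refine le_distT h (abs_le.2 ⟨?_, ?_⟩) <;>
        linarith [hx.trans (distT_le_fract x), hx.trans (distT_le_one_sub_fract x)]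
    have htwo : ‖eC (-(ζ * Int.fract x)) - eC (-(ζ * (j / Q)))‖ ≤ 2 := by
      refine (norm_sub_le _ _).trans_eq ?_
      rw [norm_eC, norm_eC, one_add_one_eq_two]
    refine le_add_of_nonneg_of_le (by positivity) ((mul_le_mul htwo (fejer_le hη hdist) hfejer
      zero_le_two).trans_eq ?_)
    ring

lemma norm_eC_fract_sub_fejerApprox_le {Q : ℕ} (hQ : 0 < Q) {η ζ x : ℝ} (hη : 0 < η)
    (hx : η ≤ distT x) :
    ‖eC (-(ζ * Int.fract x)) - fejerApprox Q ζ x‖ ≤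
      2 * Real.pi * |ζ| * η + 1 / (2 * η ^ 2 * Q) := by
  have hsplit : eC (-(ζ * Int.fract x)) - fejerApprox Q ζ x =
      ∑ j ∈ range Q, (eC (-(ζ * Int.fract x)) - eC (-(ζ * (j / Q)))) *
        (fejer Q (x - j / Q) : ℂ) := by
    simp only [sub_mul]
    rw [Finset.sum_sub_distrib, ← Finset.mul_sum, ← Complex.ofReal_sum, sum_fejer_sub_div hQ,
      Complex.ofReal_one, mul_one, fejerApprox]
  rw [hsplit]
  refine (norm_sum_le_of_le _ fun j hj => ?_).trans_eq (?_ : ∑ j ∈ range Q, (2 * Real.pi * |ζ| * η *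
    fejer Q (x - j / Q) + 1 / (2 * η ^ 2 * (Q : ℝ) ^ 2)) = _)
  · rw [norm_mul, Complex.norm_real, Real.norm_of_nonneg (fejer_nonneg _ _)]
    exact norm_sub_mul_fejer_le (Finset.mem_range.1 hj) hη hx
  · rw [Finset.sum_add_distrib, ← Finset.mul_sum, sum_fejer_sub_div hQ, Finset.sum_const,
      Finset.card_range, nsmul_eq_mul]
    field_simp

/-! ### Counting points close to the integers -/

section Counting

variable {α : Type*} {I : Finset α} {x : α → ℝ} {N R : ℕ}

lemma sum_fejer_le (hR : 0 < R) (hI : #I ≤ N)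
    (hx : ∀ k : ℤ, k ≠ 0 → |k| < R → ‖∑ n ∈ I, eC (k * x n)‖ ≤ (N : ℝ) / R) :
    ∑ n ∈ I, fejer R (x n) ≤ 2 * N / R := by
  have : (0 : ℝ) < R := by exact_mod_cast hR
  have hsum : ∑ n ∈ I, ‖∑ r ∈ range R, eC (r * x n)‖ ^ 2 ≤ R * N + (R : ℝ) ^ 2 * (N / R) := by
    refine sum_norm_sq_sum_le I (b := fun r n => eC (r * x n)) (by positivity) (fun r _ => ?_)
      fun r s hrs hs => ?_
    · simpa only [norm_eC, one_pow, Finset.sum_const, nsmul_eq_mul, mul_one, Nat.cast_le] using hI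
    · have h := hx (r - s) (by omega) (abs_lt.2 (by omega))
      push_cast at h
      simpa only [← eC_sub, ← sub_mul] using h
  simp only [fejer]
  rw [← Finset.sum_div, div_le_iff₀ (by positivity)]
  refine hsum.trans_eq ?_
  field_simp
  ring

lemma card_distT_le_le (hR : 0 < R) (hI : #I ≤ N)
    (hx : ∀ k : ℤ, k ≠ 0 → |k| < R → ‖∑ n ∈ I, eC (k * x n)‖ ≤ (N : ℝ) / R) :
    (#{n ∈ I | distT (x n) ≤ 1 / (16 * R)} : ℝ) ≤ 8 * N / R := by
  set J := {n ∈ I | distT (x n) ≤ 1 / (16 * R)}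
  have hJ : (#J : ℝ) * (1 / 4) ≤ 2 * N / R :=
    calc (#J : ℝ) * (1 / 4) = ∑ _n ∈ J, (1 / 4 : ℝ) := by rw [Finset.sum_const, nsmul_eq_mul]
      _ ≤ ∑ n ∈ J, fejer R (x n) :=
          Finset.sum_le_sum fun n hn => one_div_four_le_fejer hR (Finset.mem_filter.1 hn).2
      _ ≤ ∑ n ∈ I, fejer R (x n) :=
          Finset.sum_le_sum_of_subset_of_nonneg (Finset.filter_subset _ _)
            fun n _ _ => fejer_nonneg _ _
      _ ≤ 2 * N / R := sum_fejer_le hR hI hx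
  linarith [show 8 * (N : ℝ) / R = 4 * (2 * N / R) by ring]

end Counting

/-! ### Removing the integer parts -/

lemma norm_prod_sub_prod_le_sum {ι : Type*} (s : Finset ι) {f g : ι → ℂ} (hf : ∀ i ∈ s, ‖f i‖ ≤ 1)
    (hg : ∀ i ∈ s, ‖g i‖ ≤ 1) : ‖∏ i ∈ s, f i - ∏ i ∈ s, g i‖ ≤ ∑ i ∈ s, ‖f i - g i‖ := by
  classical
  induction s using Finset.induction_on with
  | empty => simp
  | insert a s ha ih =>
    rw [Finset.forall_mem_insert] at hf hg
    have hprod : ‖∏ i ∈ s, f i‖ ≤ 1 := by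
      rw [norm_prod]
      exact Finset.prod_le_one (fun _ _ => norm_nonneg _) hf.2
    rw [Finset.prod_insert ha, Finset.prod_insert ha, Finset.sum_insert ha]
    calc ‖f a * ∏ i ∈ s, f i - g a * ∏ i ∈ s, g i‖
        = ‖(f a - g a) * ∏ i ∈ s, f i + g a * (∏ i ∈ s, f i - ∏ i ∈ s, g i)‖ := by ring_nf
      _ ≤ ‖f a - g a‖ * ‖∏ i ∈ s, f i‖ + ‖g a‖ * ‖∏ i ∈ s, f i - ∏ i ∈ s, g i‖ := by
          rw [← norm_mul, ← norm_mul]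
          exact norm_add_le _ _
      _ ≤ ‖f a - g a‖ + ∑ i ∈ s, ‖f i - g i‖ :=
          add_le_add (mul_le_of_le_one_right (norm_nonneg _) hprod)
            ((mul_le_of_le_one_left (norm_nonneg _) hg.1).trans (ih hf.2 hg.2))

lemma eC_mul_floor (ζ x : ℝ) : eC (ζ * ⌊x⌋) = eC (ζ * x) * eC (-(ζ * Int.fract x)) := by
  rw [← eC_add, ← Int.self_sub_fract]
  ring_nf

section FloorRemoval

variable {α ι : Type*} [Fintype ι] {I : Finset α}

lemma norm_sum_prod_sum_le {τ : Type*} {T : Finset τ} {a : ι → τ → ℂ} {g : ι → τ → α → ℂ} {Y : ℝ}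
    (hY : ∀ t : ι → τ, (∀ i, t i ∈ T) → ‖∑ n ∈ I, ∏ i, g i (t i) n‖ ≤ Y) :
    ‖∑ n ∈ I, ∏ i, ∑ t ∈ T, a i t * g i t n‖ ≤ (∏ i, ∑ t ∈ T, ‖a i t‖) * Y := by
  classical
  simp only [Finset.prod_univ_sum, Finset.prod_mul_distrib]
  rw [Finset.sum_comm, Finset.sum_mul]
  refine norm_sum_le_of_le _ fun t ht => ?_
  rw [← Finset.mul_sum, norm_mul, norm_prod]
  gcongr
  exact hY t (Fintype.mem_piFinset.1 ht)

lemma sum_norm_fejerCoeff_le (Q : ℕ) (ζ : ℝ) :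
    ∑ t ∈ range Q ×ˢ range Q, ‖fejerCoeff Q ζ (t.1 - t.2)‖ ≤ Q := by
  refine (Finset.sum_le_sum fun t _ => norm_fejerCoeff_le Q ζ (t.1 - t.2)).trans_eq ?_
  rw [Finset.sum_const, Finset.card_product, Finset.card_range, nsmul_eq_mul, Nat.cast_mul,
    mul_assoc, mul_one_div, mul_div_assoc']
  exact mul_self_div_self _

variable {x : ι → α → ℝ} {ζ : ι → ℝ} {Y : ℝ}

lemma norm_sum_prod_fejerApprox_le {Q : ℕ} (hQ : 0 < Q)
    (hY : ∀ k : ι → ℤ, (∀ i, |k i| < Q) → ‖∑ n ∈ I, eC (∑ i, (ζ i + k i) * x i n)‖ ≤ Y) :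
    ‖∑ n ∈ I, ∏ i, (eC (ζ i * x i n) * fejerApprox Q (ζ i) (x i n))‖ ≤
      (Q : ℝ) ^ Fintype.card ι * Y := by
  have hY0 : 0 ≤ Y := (norm_nonneg _).trans (hY 0 fun _ => by simpa using hQ)
  have hexpand : ∀ i n, eC (ζ i * x i n) * fejerApprox Q (ζ i) (x i n) =
      ∑ t ∈ range Q ×ˢ range Q, fejerCoeff Q (ζ i) (t.1 - t.2) *
        eC ((ζ i + ((t.1 - t.2 : ℤ) : ℝ)) * x i n) := fun i n => by
    rw [fejerApprox_eq_sum, Finset.mul_sum]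
    refine Finset.sum_congr rfl fun t _ => ?_
    rw [mul_left_comm, ← eC_add, ← add_mul]
  have hcoeff : ∏ i, ∑ t ∈ range Q ×ˢ range Q, ‖fejerCoeff Q (ζ i) (t.1 - t.2)‖ ≤
      (Q : ℝ) ^ Fintype.card ι :=
    (Finset.prod_le_prod (fun i _ => Finset.sum_nonneg fun t _ => norm_nonneg _)
      fun i _ => sum_norm_fejerCoeff_le Q (ζ i)).trans_eq (Finset.prod_const _)
  simp only [hexpand]
  refine (norm_sum_prod_sum_le fun t ht => ?_).trans (mul_le_mul_of_nonneg_right hcoeff hY0)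
  simp only [← eC_sum]
  refine hY (fun i => (t i).1 - (t i).2) fun i => ?_
  have hti := ht i
  rw [Finset.mem_product, Finset.mem_range, Finset.mem_range] at hti
  exact abs_lt.2 (by omega)

lemma norm_eC_mul_floor_sub_fejerApprox_le {p : ℕ} (hp : 0 < p) {ζ x : ℝ} (hζ : |ζ| ≤ 1 / 2) :
    ‖eC (ζ * ⌊x⌋) - eC (ζ * x) * fejerApprox (p ^ 3) ζ x‖ ≤
      129 / p + if distT x ≤ 1 / (16 * p) then 2 else 0 := by
  have hp' : (0 : ℝ) < p := by exact_mod_cast hp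
  have hQ : 0 < p ^ 3 := by positivity
  rw [eC_mul_floor, ← mul_sub, norm_mul, norm_eC, one_mul]
  split_ifs with hx
  · refine le_add_of_nonneg_of_le (by positivity) ((norm_sub_le _ _).trans ?_)
    rw [norm_eC]
    linarith [norm_fejerApprox_le hQ ζ x]
  · refine (norm_eC_fract_sub_fejerApprox_le hQ (by positivity) (not_le.1 hx).le).trans ?_
    have hmain : 2 * Real.pi * |ζ| * (1 / (16 * p)) ≤ 1 / p :=
      calc 2 * Real.pi * |ζ| * (1 / (16 * p)) ≤ 2 * 4 * (1 / 2) * (1 / (16 * p)) := by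
            gcongr
            exact Real.pi_le_four
        _ ≤ 1 / p := by
            rw [mul_one_div, div_le_div_iff₀ (by positivity) hp']
            linarith
    have htail : 1 / (2 * (1 / (16 * (p : ℝ))) ^ 2 * (p ^ 3 : ℕ)) = 128 / p := by
      push_cast
      field_simp
      norm_num
    rw [htail, add_zero]
    exact (add_le_add_left hmain _).trans_eq (by ring)

lemma norm_sum_eC_mul_floor_le {p N : ℕ} (hp : 0 < p) (hI : #I ≤ N) (hζ : ∀ i, |ζ i| ≤ 1 / 2)
    (hx : ∀ i, ∀ k : ℤ, k ≠ 0 → |k| < p → ‖∑ n ∈ I, eC (k * x i n)‖ ≤ (N : ℝ) / p)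
    (hY : ∀ k : ι → ℤ, (∀ i, |k i| < (p ^ 3 : ℕ)) →
      ‖∑ n ∈ I, eC (∑ i, (ζ i + k i) * x i n)‖ ≤ Y) :
    ‖∑ n ∈ I, eC (∑ i, ζ i * ⌊x i n⌋)‖ ≤
      145 * Fintype.card ι * N / p + ((p ^ 3 : ℕ) : ℝ) ^ Fintype.card ι * Y := by
  have hQ : 0 < p ^ 3 := by positivity
  set P : α → ℂ := fun n => ∏ i, (eC (ζ i * x i n) * fejerApprox (p ^ 3) (ζ i) (x i n))
  have hpoint : ∀ n, ‖eC (∑ i, ζ i * ⌊x i n⌋) - P n‖ ≤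
      ∑ i, (129 / (p : ℝ) + if distT (x i n) ≤ 1 / (16 * p) then 2 else 0) := fun n => by
    rw [eC_sum]
    refine (norm_prod_sub_prod_le_sum _ (fun i _ => (norm_eC _).le) fun i _ => ?_).trans
      (Finset.sum_le_sum fun i _ => norm_eC_mul_floor_sub_fejerApprox_le hp (hζ i))
    rw [norm_mul, norm_eC, one_mul]
    exact norm_fejerApprox_le hQ _ _
  have herror : ‖∑ n ∈ I, (eC (∑ i, ζ i * ⌊x i n⌋) - P n)‖ ≤ 145 * Fintype.card ι * N / p :=
    calc ‖∑ n ∈ I, (eC (∑ i, ζ i * ⌊x i n⌋) - P n)‖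
        ≤ ∑ n ∈ I, ∑ i, (129 / (p : ℝ) + if distT (x i n) ≤ 1 / (16 * p) then 2 else 0) :=
          norm_sum_le_of_le _ fun n _ => hpoint n
      _ = ∑ i, (#I * (129 / (p : ℝ)) + #{n ∈ I | distT (x i n) ≤ 1 / (16 * p)} * 2) := by
          rw [Finset.sum_comm]
          simp only [Finset.sum_add_distrib, Finset.sum_const, ← Finset.sum_filter, nsmul_eq_mul]
      _ ≤ ∑ _i : ι, (N * (129 / (p : ℝ)) + 8 * N / p * 2) := by
          gcongr with i
          exact card_distT_le_le hp hI (hx i)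
      _ = 145 * Fintype.card ι * N / p := by
          rw [Finset.sum_const, Finset.card_univ, nsmul_eq_mul]
          ring
  rw [Finset.sum_sub_distrib] at herror
  linarith [norm_sub_norm_le (∑ n ∈ I, eC (∑ i, ζ i * ⌊x i n⌋)) (∑ n ∈ I, P n),
    norm_sum_prod_fejerApprox_le hQ hY]

end FloorRemoval

/-! ### The inverse theorem -/

lemma distT_sub_round (x : ℝ) : distT (x - round x) = distT x := by
  rw [← distT_add_intCast (x - round x) (round x), sub_add_cancel]

lemma eC_mul_intCast (x : ℝ) (k : ℤ) : eC (x * k) = eC ((x - round x) * k) := by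
  rw [← eC_add_intCast ((x - round x) * k) (round x * k), Int.cast_mul, ← add_mul, sub_add_cancel]

section Inverse

variable {ι : Type*} [Fintype ι] [Nonempty ι] {c : ι → ℝ}

lemma exists_norm_sum_le_of_lt_mul_rpow (hc : Function.Injective c)
    (hint : ∀ i, ∀ k : ℤ, c i ≠ k) :
    ∃ C : ℕ, ∀ {N A : ℕ} {θ : ι → ℝ} {i : ι}, 2 ≤ A → (∀ l, |θ l| ≤ A) → (A : ℝ) ^ C < N →
      (A : ℝ) ^ C < |θ i| * (N : ℝ) ^ c i →
      ‖∑ n ∈ Finset.Ioc (N / 2) N, eC (∑ l, θ l * (n : ℝ) ^ c l)‖ ≤ (N : ℝ) / A := by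
  obtain ⟨C, hC⟩ := exists_smooth_inverse hc hint
  refine ⟨C, fun {N A θ i} hA hθ hN hi => le_of_not_gt fun hlt => ?_⟩
  rcases hC hA hθ hlt.le with h | h
  · exact h.not_gt hN
  · exact ((le_phaseSize c θ N.cast_nonneg i).trans h).not_gt hi

lemma exists_norm_weyl_sum_le {a : ℝ} (ha : ∀ k : ℤ, a ≠ k) :
    ∃ C : ℕ, ∀ {N p : ℕ} {k : ℤ}, 2 ≤ p → (p : ℝ) ^ C < N → (p : ℝ) ^ C < (N : ℝ) ^ a →
      k ≠ 0 → |k| < p → ‖∑ n ∈ Finset.Ioc (N / 2) N, eC (k * (n : ℝ) ^ a)‖ ≤ (N : ℝ) / p := by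
  obtain ⟨C, hC⟩ := exists_norm_sum_le_of_lt_mul_rpow (c := fun _ : Unit => a)
    (Function.injective_of_subsingleton _) fun _ => ha
  refine ⟨C, fun {N p k} hp hN hNa hk hkp => ?_⟩
  have hk1 : (1 : ℝ) ≤ |(k : ℝ)| := by exact_mod_cast Int.one_le_abs hk
  have hkp' : |(k : ℝ)| ≤ p := by exact_mod_cast hkp.le
  simpa only [Fintype.sum_unique] using hC (θ := fun _ => k) (i := ()) hp (fun _ => hkp') hN
    (hNa.trans_le (le_mul_of_one_le_left (by positivity) hk1))

lemma exists_norm_sum_translate_le (hc : Function.Injective c) (hint : ∀ i, ∀ k : ℤ, c i ≠ k) :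
    ∃ C : ℕ, ∀ {N A : ℕ} {ζ : ι → ℝ} {i : ι}, 2 ≤ A → (∀ l, |ζ l| ≤ 1) → (A : ℝ) ^ C < N →
      (A : ℝ) ^ C < distT (ζ i) * (N : ℝ) ^ c i → ∀ k : ι → ℤ, (∀ l, |k l| < A) →
      ‖∑ n ∈ Finset.Ioc (N / 2) N, eC (∑ l, (ζ l + k l) * (n : ℝ) ^ c l)‖ ≤ (N : ℝ) / A := by
  obtain ⟨C, hC⟩ := exists_norm_sum_le_of_lt_mul_rpow hc hint
  refine ⟨C, fun {N A ζ i} hA hζ hN hi k hk => hC (i := i) hA (fun l => ?_) hN (hi.trans_le ?_)⟩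
  · have hkl : |(k l : ℝ)| + 1 ≤ A := by exact_mod_cast Int.add_one_le_iff.2 (hk l)
    linarith [abs_add_le (ζ l) (k l), hζ l]
  · gcongr
    simpa only [distT_add_intCast, Int.cast_zero, sub_zero] using
      distT_le_abs_sub_intCast (ζ i + k i) 0

lemma exists_norm_sum_floor_le (hc : Function.Injective c) (hint : ∀ i, ∀ k : ℤ, c i ≠ k) :
    ∃ E : ℕ, ∀ {N p : ℕ} {ζ : ι → ℝ} {i₀ : ι}, 2 ≤ p → (∀ i, |ζ i| ≤ 1 / 2) → (p : ℝ) ^ E < N →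
      (∀ i, (p : ℝ) ^ E < (N : ℝ) ^ c i) → (p : ℝ) ^ E < distT (ζ i₀) * (N : ℝ) ^ c i₀ →
      ‖∑ n ∈ Finset.Ioc (N / 2) N, eC (∑ i, ζ i * ⌊(n : ℝ) ^ c i⌋)‖ ≤
        146 * Fintype.card ι * N / p := by
  choose C hC using fun i => exists_norm_weyl_sum_le (hint i)
  obtain ⟨C₁, hC₁⟩ := Finite.exists_le C
  obtain ⟨C₂, hC₂⟩ := exists_norm_sum_translate_le hc hint
  set m := Fintype.card ι
  have hm : 1 ≤ m := Fintype.card_pos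
  refine ⟨C₁ + (3 * m + 1) * C₂, fun {N p ζ i₀} hp hζ hN hNc hi₀ => ?_⟩
  have hp1 : (1 : ℝ) ≤ p := by exact_mod_cast (by omega : 1 ≤ p)
  have hE₁ : ∀ i, (p : ℝ) ^ C i ≤ p ^ (C₁ + (3 * m + 1) * C₂) := fun i =>
    pow_le_pow_right₀ hp1 (Nat.le_add_right_of_le (hC₁ i))
  have hE₂ : ((p ^ (3 * m + 1) : ℕ) : ℝ) ^ C₂ ≤ p ^ (C₁ + (3 * m + 1) * C₂) := by
    rw [Nat.cast_pow, ← pow_mul]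
    exact pow_le_pow_right₀ hp1 (by omega)
  have hpA : p ^ 3 ≤ p ^ (3 * m + 1) := Nat.pow_le_pow_right (by omega) (by omega)
  have hA : 2 ≤ p ^ (3 * m + 1) := hp.trans (Nat.le_self_pow (by omega) p)
  have hfloor := norm_sum_eC_mul_floor_le (I := Finset.Ioc (N / 2) N) (N := N)
    (x := fun i n => (n : ℝ) ^ c i) (by omega : 0 < p) (by rw [Nat.card_Ioc]; omega) hζ
    (fun i k hk hkp => hC i hp ((hE₁ i).trans_lt hN) ((hE₁ i).trans_lt (hNc i)) hk hkp)
    (fun k hk => hC₂ hA (fun i => (hζ i).trans (by norm_num)) (hE₂.trans_lt hN)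
      (hE₂.trans_lt hi₀) k fun i => (hk i).trans_le (by exact_mod_cast hpA))
  refine hfloor.trans ?_
  have hmain : ((p ^ 3 : ℕ) : ℝ) ^ m * (N / (p ^ (3 * m + 1) : ℕ)) = N / p := by
    push_cast
    rw [← pow_mul, pow_succ]
    field_simp
  calc 145 * m * (N : ℝ) / p + ((p ^ 3 : ℕ) : ℝ) ^ m * (N / (p ^ (3 * m + 1) : ℕ))
      = (145 * m + 1) * N / p := by
        rw [hmain]
        ring
    _ ≤ 146 * m * N / p := by
        have : (1 : ℝ) ≤ m := by exact_mod_cast hm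
        gcongr
        linarith

lemma exists_inverse (hc : Function.Injective c) (hpos : ∀ i, 0 < c i)
    (hint : ∀ i, ∀ k : ℤ, c i ≠ k) :
    ∃ E : ℕ, ∀ {N p : ℕ} {ξ : ι → ℝ}, 2 ≤ p →
      146 * Fintype.card ι * N / p <
        ‖∑ n ∈ Finset.Ioc (N / 2) N, eC (∑ i, ξ i * ⌊(n : ℝ) ^ c i⌋)‖ →
      (N : ℝ) ≤ (p : ℝ) ^ E ∨ ∀ i, distT (ξ i) * (N : ℝ) ^ c i ≤ (p : ℝ) ^ E := by
  obtain ⟨E, hE⟩ := exists_norm_sum_floor_le hc hint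
  obtain ⟨r, hr⟩ : ∃ r : ℕ, ∀ i, 1 / c i ≤ r := by
    obtain ⟨R, hR⟩ := Finite.exists_le fun i => 1 / c i
    exact ⟨⌈R⌉₊, fun i => (hR i).trans (Nat.le_ceil R)⟩
  refine ⟨E * (r + 1), fun {N p ξ} hp hξ => ?_⟩
  have hp1 : (1 : ℝ) ≤ p := by exact_mod_cast (by omega : 1 ≤ p)
  have hEr : (p : ℝ) ^ E ≤ (p : ℝ) ^ (E * (r + 1)) :=
    pow_le_pow_right₀ hp1 (Nat.le_mul_of_pos_right E r.succ_pos)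
  by_contra! hcon
  obtain ⟨hN, i₀, hi₀⟩ := hcon
  have hNc : ∀ i, (p : ℝ) ^ E < (N : ℝ) ^ c i := fun i => by
    have hcr : 1 ≤ (r + 1 : ℕ) * c i := by
      have := (div_le_iff₀ (hpos i)).1 (hr i)
      push_cast
      linarith [hpos i]
    calc (p : ℝ) ^ E ≤ ((p : ℝ) ^ E) ^ ((r + 1 : ℕ) * c i) :=
          Real.self_le_rpow_of_one_le (one_le_pow₀ hp1) hcr
      _ = ((p : ℝ) ^ (E * (r + 1))) ^ c i := by
          rw [Real.rpow_mul (by positivity), Real.rpow_natCast, ← pow_mul]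
      _ < (N : ℝ) ^ c i := by
          gcongr
          exact hpos i
  refine hξ.not_ge ?_
  simp only [eC_sum, eC_mul_intCast (ξ _)]
  simp only [← eC_sum]
  refine hE (i₀ := i₀) hp (fun i => abs_sub_round (ξ i)) (hEr.trans_lt hN) hNc ?_
  rw [distT_sub_round]
  exact hEr.trans_lt hi₀

end Inverse

lemma norm_mZ_eq {m : ℕ} (c : Fin m → ℝ) (N : ℕ) (ξ : Fin m → ℝ) :
    ‖mZ m c N ξ‖ = ‖∑ n ∈ Finset.Ioc (N / 2) N, eC (∑ i, ξ i * ⌊(n : ℝ) ^ c i⌋)‖ / N := by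
  have hIoc : {n ∈ Finset.Icc 1 N | N < 2 * n} = Finset.Ioc (N / 2) N := by
    ext n
    simp only [Finset.mem_filter, Finset.mem_Icc, Finset.mem_Ioc]
    omega
  rw [mZ, ← Finset.sum_filter, hIoc, norm_mul, norm_inv, Complex.norm_natCast, inv_mul_eq_div]

lemma pow_le_mul_rpow_neg {x V δ : ℝ} (hx : 0 ≤ x) (hxV : x ≤ V / δ) (hV : 0 ≤ V) (hδ : 0 < δ)
    (hδ' : δ ≤ 1) (E : ℕ) : x ^ E ≤ (V ^ E + E) * δ ^ (-(V ^ E + E)) :=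
  calc x ^ E ≤ (V / δ) ^ E := by gcongr
    _ = V ^ E * δ ^ (-(E : ℝ)) := by
        rw [div_pow, Real.rpow_neg hδ.le, Real.rpow_natCast, div_eq_mul_inv]
    _ ≤ (V ^ E + E) * δ ^ (-(V ^ E + E)) := by
        have hVE : 0 ≤ V ^ E := by positivity
        gcongr ?_ * ?_
        · exact le_add_of_nonneg_right E.cast_nonneg
        · exact Real.rpow_le_rpow_of_exponent_ge hδ hδ' (by linarith)

lemma exists_nat_mul_lt_of_pos {m : ℕ} (hm : 0 < m) {δ : ℝ} (hδ : 0 < δ) (hδ' : δ ≤ 1) :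
    ∃ p : ℕ, 2 ≤ p ∧ 146 * (m : ℝ) / p < δ ∧ (p : ℝ) ≤ 148 * m / δ := by
  have hm1 : (1 : ℝ) ≤ m := by exact_mod_cast hm
  have hle : 147 * m / δ ≤ ⌈147 * m / δ⌉₊ := Nat.le_ceil _
  have h147 : 147 * (m : ℝ) ≤ 147 * m / δ := le_div_self (by positivity) hδ hδ'
  have hp : (0 : ℝ) < ⌈147 * m / δ⌉₊ := by linarith
  refine ⟨⌈147 * m / δ⌉₊, ?_, ?_, (Nat.ceil_lt_add_one (by positivity)).le.trans ?_⟩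
  · exact_mod_cast (by linarith : (2 : ℝ) ≤ ⌈147 * m / δ⌉₊)
  · rw [div_le_iff₀ hδ] at hle
    rw [div_lt_iff₀ hp]
    linarith
  · rw [div_add_one hδ.ne']
    gcongr
    linarith

/-- inverse theorem for the exponential sum, Lemma 4.1 of
the paper: for non-integer `0 < c₁ < ⋯ < c_m` there is `C > 0` such that for
every `N ≥ 1`, `δ ∈ (0,1]` and `ξ₁,…,ξ_m ∈ ℝ`, if
`δ ≤ |m_{N;ℤ}(ξ₁,…,ξ_m)|` then either `N ≤ C δ^{−C}` or
`‖ξ_i‖_𝕋 ≤ C δ^{−C} N^{−c_i}` for every `i`. -/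
theorem stmt9 {m : ℕ} (hm : 0 < m) (c : Fin m → ℝ)
    (hpos : ∀ i, 0 < c i) (hmono : StrictMono c)
    (hint : ∀ i, ∀ k : ℤ, c i ≠ (k : ℝ)) :
    ∃ C : ℝ, 0 < C ∧ ∀ N : ℕ, 1 ≤ N → ∀ δ : ℝ, 0 < δ → δ ≤ 1 →
      ∀ ξ : Fin m → ℝ, δ ≤ ‖mZ m c N ξ‖ →
        (N : ℝ) ≤ C * δ ^ (-C) ∨
          ∀ i, distT (ξ i) ≤ C * δ ^ (-C) * (N : ℝ) ^ (-(c i)) := by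
  have : Nonempty (Fin m) := ⟨⟨0, hm⟩⟩
  obtain ⟨E, hE⟩ := exists_inverse hmono.injective hpos hint
  refine ⟨(148 * m) ^ E + E, by positivity, fun N hN δ hδ hδ1 ξ hξ => ?_⟩
  have hN' : (0 : ℝ) < N := by exact_mod_cast hN
  obtain ⟨p, hp, hpδ, hpm⟩ := exists_nat_mul_lt_of_pos hm hδ hδ1
  have hpE := pow_le_mul_rpow_neg p.cast_nonneg hpm (by positivity) hδ hδ1 E
  have hlarge : 146 * m * N / p <
      ‖∑ n ∈ Finset.Ioc (N / 2) N, eC (∑ i, ξ i * ⌊(n : ℝ) ^ c i⌋)‖ := by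
    rw [norm_mZ_eq, le_div_iff₀ hN'] at hξ
    rw [mul_div_right_comm]
    exact (mul_lt_mul_of_pos_right hpδ hN').trans_le hξ
  rcases hE hp (by rwa [Fintype.card_fin]) with h | h
  · exact Or.inl (h.trans hpE)
  · refine Or.inr fun i => ?_
    rw [Real.rpow_neg hN'.le, ← div_eq_mul_inv, le_div_iff₀ (by positivity)]
    exact (h i).trans hpE

end
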